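/- arXiv:1401.3286 — 10 statements merged into one kernel-verified Lean document; each statement's English description precedes it below -/
import Mathlib

section
/- Let Δ ≥ 0 and let w : ℕ≥1 → ℝ be a sequence of positive real numbers such that for every σ > Δ there exists a constant C_σ > 0 with w_n^{-1} n^{-2σ} ≤ C_σ for every n ≥ 1. Then for every natural number N ≥ 1 and every σ > Δ, the series ∑_{n ∈ ⟨P_N⟩} w_n^{-1} n^{-2σ} converges (i.e. the family (w_n^{-1} n^{-2σ})_{n ∈ ⟨P_N⟩} is summable). -/
/-- `⟨P_N⟩`: the set of positive integers all of whose prime factors lie among the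
first `N` primes. -/
def smoothSet (N : ℕ) : Set ℕ :=
  {n : ℕ | 0 < n ∧ ∀ p : ℕ, p.Prime → p ∣ n → ∃ j < N, p = Nat.nth Nat.Prime j}

/-- For `ε > 0`, the sum of `n ^ (-ε)` over the integers `n` whose prime factors all lie in a
fixed finite set converges. -/
theorem summable_rpow_neg_factoredNumbers {ε : ℝ} (hε : 0 < ε) (s : Finset ℕ) :
    Summable (fun n : Nat.factoredNumbers s => ((n : ℕ) : ℝ) ^ (-ε)) := by
  let f : ℕ →* ℝ :=
    { toFun := fun n => (n : ℝ) ^ (-ε)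
      map_one' := by simp
      map_mul' := fun m n => by
        push_cast
        exact Real.mul_rpow (Nat.cast_nonneg m) (Nat.cast_nonneg n) }
  have hf : ∀ {p : ℕ}, p.Prime → ‖f p‖ < 1 := by
    intro p hp
    have hnonneg : 0 ≤ f p := Real.rpow_nonneg (Nat.cast_nonneg p) _
    rw [Real.norm_of_nonneg hnonneg]
    exact Real.rpow_lt_one_of_one_lt_of_neg (by exact_mod_cast hp.one_lt) (by linarith)
  exact (EulerProduct.summable_and_hasSum_factoredNumbers_prod_filter_prime_geometric hf s).1.of_norm

theorem smoothSet_subset_factoredNumbers (N : ℕ) :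
    smoothSet N ⊆ Nat.factoredNumbers ((Finset.range N).image (Nat.nth Nat.Prime)) := by
  rintro n ⟨-, hn⟩
  refine Nat.mem_factoredNumbers'.2 fun p hp hpn => ?_
  obtain ⟨j, hj, rfl⟩ := hn p hp hpn
  exact Finset.mem_image_of_mem _ (Finset.mem_range.2 hj)

/-- If `Δ ≥ 0` and the positive weights `w_n` satisfy the growth condition
`w_n⁻¹ n^{-2σ} ≤ C_σ` (for all `n ≥ 1`) for every `σ > Δ`, then for every `N ≥ 1`
and every `σ > Δ`, the family `(w_n⁻¹ n^{-2σ})_{n ∈ ⟨P_N⟩}` is summable. -/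
theorem stmt_3 (Δ : ℝ) (hΔ : 0 ≤ Δ) (w : ℕ → ℝ) (hw : ∀ n : ℕ, 1 ≤ n → 0 < w n)
    (hgrowth : ∀ σ : ℝ, Δ < σ → ∃ C : ℝ, 0 < C ∧
      ∀ n : ℕ, 1 ≤ n → (w n)⁻¹ * (n : ℝ) ^ (-(2 * σ)) ≤ C) :
    ∀ N : ℕ, 1 ≤ N → ∀ σ : ℝ, Δ < σ →
      Summable (fun n : smoothSet N => (w n)⁻¹ * ((n : ℕ) : ℝ) ^ (-(2 * σ))) := by
  intro N _ σ hσ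
  obtain ⟨τ, hΔτ, hτσ⟩ := exists_between hσ
  obtain ⟨C, -, hC⟩ := hgrowth τ hΔτ
  have hpos : ∀ n : smoothSet N, 1 ≤ (n : ℕ) := fun n => n.2.1
  have hsum : Summable (fun n : smoothSet N => ((n : ℕ) : ℝ) ^ (-(2 * (σ - τ)))) := by
    have hε : 0 < 2 * (σ - τ) := by linarith
    have hinj := Set.inclusion_injective (smoothSet_subset_factoredNumbers N)
    have h := (summable_rpow_neg_factoredNumbers hε _).comp_injective hinj
    simpa only [Function.comp_def, Set.coe_inclusion] using h
  refine (hsum.mul_left C).of_nonneg_of_le (fun n => ?_) fun n => ?_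
  · exact mul_nonneg (inv_nonneg.2 (hw n (hpos n)).le) (Real.rpow_nonneg (Nat.cast_nonneg _) _)
  · have hn : (0 : ℝ) < ((n : ℕ) : ℝ) := Nat.cast_pos.2 (hpos n)
    rw [show -(2 * σ) = -(2 * τ) + -(2 * (σ - τ)) by ring, Real.rpow_add hn, ← mul_assoc]
    exact mul_le_mul_of_nonneg_right (hC n (hpos n)) (Real.rpow_nonneg hn.le _)
end

section
/- Let μ be a nonzero finite Borel measure on [0,∞) and for each positive integer n set w_n = ∫_0^∞ n^{-2σ} dμ(σ), assumed finite for every n ≥ 1. If the sequence {w_n} is completely multiplicative, i.e. w_{mn} = w_m · w_n for all positive integers m and n, then μ is a Dirac point mass: there exists c ≥ 0 such that μ is the Dirac measure at c. -/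
open MeasureTheory

/-- If `μ` is a nonzero finite Borel measure on `[0,∞)` (modelled as a measure on `ℝ`
vanishing on `(-∞,0)`), the weights `w_n = ∫ n^{-2t} dμ(t)` are all finite (i.e. the
integrands are integrable), and the sequence `w_n` is completely multiplicative, then
`μ` is a Dirac point mass at some `c ≥ 0`. -/
theorem stmt_4 (μ : Measure ℝ) [IsFiniteMeasure μ] (hμ : μ ≠ 0)
    (hsupp : μ (Set.Iio (0 : ℝ)) = 0)
    (hint : ∀ n : ℕ, 1 ≤ n → Integrable (fun t : ℝ => (n : ℝ) ^ (-(2 * t))) μ)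
    (w : ℕ → ℝ) (hw : ∀ n : ℕ, 1 ≤ n → w n = ∫ t, (n : ℝ) ^ (-(2 * t)) ∂μ)
    (hmult : ∀ m n : ℕ, 1 ≤ m → 1 ≤ n → w (m * n) = w m * w n) :
    ∃ c : ℝ, 0 ≤ c ∧ μ = Measure.dirac c := by
  have hone : μ.real Set.univ = 1 := by
    have h1 : w 1 = μ.real Set.univ := by simp [hw 1 le_rfl]
    have h2 : w 1 = w 1 * w 1 := by simpa using hmult 1 1 le_rfl le_rfl
    have h3 : w 1 ≠ 0 := by rw [h1]; simpa [measureReal_eq_zero_iff] using hμ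
    rw [← h1]
    exact (mul_eq_left₀ h3).mp h2.symm
  have : IsProbabilityMeasure μ :=
    ⟨by simpa [measureReal_def, ENNReal.toReal_eq_one_iff] using hone⟩
  have hsq : ∀ t : ℝ, (4 : ℝ) ^ (-(2 * t)) = ((2 : ℝ) ^ (-(2 * t))) ^ 2 := fun t => by
    rw [pow_two, ← Real.mul_rpow (by norm_num) (by norm_num)]
    norm_num
  have hint2 : Integrable (fun t : ℝ => (2 : ℝ) ^ (-(2 * t))) μ := by
    simpa using hint 2 (by norm_num)
  have hint4 : Integrable (fun t : ℝ => ((2 : ℝ) ^ (-(2 * t))) ^ 2) μ := by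
    simpa [hsq] using hint 4 (by norm_num)
  have hw2 : w 2 = ∫ t, (2 : ℝ) ^ (-(2 * t)) ∂μ := by simpa using hw 2 (by norm_num)
  have hw4 : w 2 * w 2 = ∫ t, ((2 : ℝ) ^ (-(2 * t))) ^ 2 ∂μ := by
    rw [← hmult 2 2 (by norm_num) (by norm_num), hw _ (by norm_num)]
    norm_num [hsq]
  -- The variance of `t ↦ 2 ^ (-2t)` vanishes.
  have hexpand : (fun t : ℝ => ((2 : ℝ) ^ (-(2 * t)) - w 2) ^ 2) =
      fun t => ((2 : ℝ) ^ (-(2 * t))) ^ 2 - 2 * w 2 * (2 : ℝ) ^ (-(2 * t)) + w 2 ^ 2 := by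
    funext t
    ring
  have hintv : Integrable (fun t : ℝ => ((2 : ℝ) ^ (-(2 * t)) - w 2) ^ 2) μ := by
    rw [hexpand]
    exact (hint4.sub (hint2.const_mul _)).add (integrable_const _)
  have hzero : ∫ t, ((2 : ℝ) ^ (-(2 * t)) - w 2) ^ 2 ∂μ = 0 := by
    rw [hexpand, integral_add (by exact hint4.sub (hint2.const_mul _)) (integrable_const _),
      integral_sub hint4 (hint2.const_mul _), integral_const_mul, ← hw2, ← hw4]
    simp only [integral_const, hone, one_smul]
    ring
  have hae : ∀ᵐ t ∂μ, (2 : ℝ) ^ (-(2 * t)) = w 2 := by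
    filter_upwards [(integral_eq_zero_iff_of_nonneg (fun t => sq_nonneg _) hintv).mp hzero]
      with t ht
    exact sub_eq_zero.mp (pow_eq_zero_iff two_ne_zero |>.mp ht)
  have hnonneg : ∀ᵐ t ∂μ, 0 ≤ t := by
    simpa [ae_iff, Set.Iio] using hsupp
  obtain ⟨c, hc, hc0⟩ := (hae.and hnonneg).exists
  refine ⟨c, hc0, ?_⟩
  have hconst : (id : ℝ → ℝ) =ᵐ[μ] fun _ => c := by
    filter_upwards [hae] with t ht
    have h := (Real.rpow_right_inj (by norm_num) (by norm_num)).mp (ht.trans hc.symm)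
    simp only [id]
    linarith
  simpa using Measure.map_congr hconst
end

section
/- There is no positive Borel measure μ on [0,∞) such that 1/d(n) = ∫_0^∞ n^{-2σ} dμ(σ) for every positive integer n, where d(n) denotes the number of positive divisors of n. -/
open MeasureTheory

/-- There is no positive Borel measure `μ` on `[0,∞)` such that
`1/d(n) = ∫_0^∞ n^{-2σ} dμ(σ)` for every positive integer `n`, where `d(n)` is the
number of positive divisors of `n`. -/
theorem stmt_5 :
    ¬ ∃ μ : Measure ℝ,
      ∀ n : ℕ, 1 ≤ n →
        (1 : ℝ) / (n.divisors.card : ℝ) =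
          ∫ σ in Set.Ici (0 : ℝ), (n : ℝ) ^ (-(2 * σ)) ∂μ := by
  rintro ⟨μ, h⟩
  -- The integral is nonincreasing in `n`, whereas `1 / d(4) = 1 / 3 < 1 / 2 = 1 / d(5)`.
  have d4 : (Nat.divisors 4).card = 3 := by decide
  have d5 : (Nat.divisors 5).card = 2 := by decide
  have h4 := h 4 (by norm_num)
  have h5 := h 5 (by norm_num)
  rw [d4] at h4
  rw [d5] at h5
  have hint : Integrable (fun σ : ℝ => ((4 : ℕ) : ℝ) ^ (-(2 * σ)))
      (μ.restrict (Set.Ici 0)) := by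
    refine Integrable.of_integral_ne_zero ?_
    rw [← h4]
    norm_num
  have hle : ∫ σ in Set.Ici (0 : ℝ), ((5 : ℕ) : ℝ) ^ (-(2 * σ)) ∂μ
      ≤ ∫ σ in Set.Ici (0 : ℝ), ((4 : ℕ) : ℝ) ^ (-(2 * σ)) ∂μ := by
    refine integral_mono_of_nonneg (Filter.Eventually.of_forall fun σ => by positivity) hint ?_
    filter_upwards [ae_restrict_mem measurableSet_Ici] with σ hσ
    have hσ0 : (0 : ℝ) ≤ σ := hσ
    exact Real.rpow_le_rpow_of_nonpos (by norm_num) (by norm_num) (by linarith)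
  rw [← h4, ← h5] at hle
  norm_num at hle
end

section
/- There is no positive Borel measure μ on [0,∞) such that 1/σ(n) = ∫_0^∞ n^{-2t} dμ(t) for every positive integer n, where σ(n) denotes the sum of the positive divisors of n. -/
open MeasureTheory

/-- There is no positive Borel measure `μ` on `[0,∞)` such that
`1/σ(n) = ∫_0^∞ n^{-2t} dμ(t)` for every positive integer `n`, where `σ(n)` is the
sum of the positive divisors of `n`. -/
theorem stmt_6 :
    ¬ ∃ μ : Measure ℝ,
      ∀ n : ℕ, 1 ≤ n →
        (1 : ℝ) / ((∑ d ∈ n.divisors, d : ℕ) : ℝ) =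
          ∫ t in Set.Ici (0 : ℝ), (n : ℝ) ^ (-(2 * t)) ∂μ := by
  rintro ⟨μ, h⟩
  -- The integrals are non-increasing in `n`, whereas `σ(4) = 7 > 6 = σ(5)`.
  have sigma_four : ∑ d ∈ Nat.divisors 4, d = 7 := by decide
  have sigma_five : ∑ d ∈ Nat.divisors 5, d = 6 := by decide
  have h4 := h 4 (by norm_num)
  have h5 := h 5 (by norm_num)
  rw [sigma_four] at h4
  rw [sigma_five] at h5
  have integrable_four :
      IntegrableOn (fun t : ℝ => ((4 : ℕ) : ℝ) ^ (-(2 * t))) (Set.Ici 0) μ :=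
    Integrable.of_integral_ne_zero (by rw [← h4]; norm_num)
  have integrable_five :
      IntegrableOn (fun t : ℝ => ((5 : ℕ) : ℝ) ^ (-(2 * t))) (Set.Ici 0) μ :=
    Integrable.of_integral_ne_zero (by rw [← h5]; norm_num)
  have hle := setIntegral_mono_on integrable_five integrable_four measurableSet_Ici
    fun t (ht : 0 ≤ t) =>
      Real.rpow_le_rpow_of_nonpos (by norm_num) (by norm_num) (by linarith)
  rw [← h4, ← h5] at hle
  norm_num at hle
end

section
/- There is no positive Borel measure μ on [0,∞) such that 1/φ(n) = ∫_0^∞ n^{-2t} dμ(t) for every positive integer n, where φ denotes Euler's totient function. -/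
open MeasureTheory

/-- There is no positive Borel measure `μ` on `[0,∞)` such that
`1/φ(n) = ∫_0^∞ n^{-2t} dμ(t)` for every positive integer `n`, where `φ` is
Euler's totient function. -/
theorem stmt_7 :
    ¬ ∃ μ : Measure ℝ,
      ∀ n : ℕ, 1 ≤ n →
        (1 : ℝ) / (n.totient : ℝ) =
          ∫ t in Set.Ici (0 : ℝ), (n : ℝ) ^ (-(2 * t)) ∂μ := by
  rintro ⟨μ, h⟩
  -- The right-hand side is antitone in `n`, but `φ 6 = 2 < 4 = φ 5`.
  have integrableOn_rpow : ∀ n : ℕ, 1 ≤ n →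
      IntegrableOn (fun t : ℝ => (n : ℝ) ^ (-(2 * t))) (Set.Ici 0) μ := by
    intro n hn
    refine Integrable.of_integral_ne_zero ?_
    rw [← h n hn]
    have : 0 < n.totient := Nat.totient_pos.mpr hn
    positivity
  have hle : ∫ t in Set.Ici (0 : ℝ), ((6 : ℕ) : ℝ) ^ (-(2 * t)) ∂μ ≤
      ∫ t in Set.Ici (0 : ℝ), ((5 : ℕ) : ℝ) ^ (-(2 * t)) ∂μ := by
    refine setIntegral_mono_on (integrableOn_rpow 6 (by norm_num))
      (integrableOn_rpow 5 (by norm_num)) measurableSet_Ici fun t ht => ?_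
    have ht : 0 ≤ t := ht
    exact Real.rpow_le_rpow_of_nonpos (by norm_num) (by norm_num) (by linarith)
  rw [← h 6 (by norm_num), ← h 5 (by norm_num), show Nat.totient 6 = 2 by decide,
    show Nat.totient 5 = 4 by decide] at hle
  norm_num at hle
end

section
/- Let w : ℕ≥1 → ℝ be a sequence of positive real numbers with w_1 = 1 that is multiplicative (w_{mn} = w_m·w_n whenever m and n are coprime) and satisfies w_{p^k} ≤ w_{p^{k-1}} for every prime p and every integer k ≥ 1. Suppose σ_0 > 0 is such that ∑_{n=1}^∞ w_n^{-1} n^{-2σ} < ∞ for every σ > σ_0, and set m = max(1, σ_0). Then for every finite list of complex points z_1, ..., z_k with Re(z_i) > m for each i, the k×k complex matrix A with entries A_{ij} = (∑_{n=1}^∞ w_n^{-1} n^{-(z_i + conj(z_j))}) / (∑_{n=1}^∞ n^{-(z_i + conj(z_j))}) is positive semidefinite. -/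
open scoped ComplexConjugate ComplexOrder

open scoped ArithmeticFunction.Moebius ArithmeticFunction.zeta

/-- The Möbius transform of a multiplicative function that increases along the powers of each
prime is nonnegative. -/
theorem ArithmeticFunction.IsMultiplicative.moebius_mul_nonneg {R : Type*} [CommRing R]
    [PartialOrder R] [IsOrderedRing R] {f : ArithmeticFunction R} (hf : f.IsMultiplicative)
    (hmono : ∀ p k : ℕ, p.Prime → f (p ^ k) ≤ f (p ^ (k + 1))) (n : ℕ) :
    0 ≤ ((μ : ArithmeticFunction R) * f) n := by
  set g : ArithmeticFunction R := (μ : ArithmeticFunction R) * f with hg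
  have hgm : g.IsMultiplicative := ArithmeticFunction.isMultiplicative_moebius.intCast.mul hf
  have hfg : (ζ : ArithmeticFunction R) * g = f := by
    rw [hg, ← mul_assoc, ArithmeticFunction.coe_zeta_mul_coe_moebius, one_mul]
  have hsum (p k : ℕ) (hp : p.Prime) : f (p ^ k) = ∑ i ∈ Finset.range (k + 1), g (p ^ i) := by
    rw [← hfg, ArithmeticFunction.coe_zeta_mul_apply, Nat.sum_divisors_prime_pow hp]
  rcases eq_or_ne n 0 with rfl | hn
  · simp
  rw [hgm.multiplicative_factorization _ hn]
  refine Finset.prod_nonneg fun p hp => ?_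
  have hp' : p.Prime := Nat.prime_of_mem_primeFactors (by simpa using hp)
  rcases n.factorization p with _ | k
  · simp [hgm.1]
  · have h := hmono p k hp'
    rw [hsum p _ hp', hsum p _ hp', Finset.sum_range_succ _ (k + 1)] at h
    exact nonneg_of_le_add_right h

/-- An entrywise convergent sum of positive semidefinite complex matrices is positive
semidefinite. -/
theorem Matrix.PosSemidef.of_hasSum {α ι : Type*} [Fintype ι] {M : α → Matrix ι ι ℂ}
    {A : Matrix ι ι ℂ} (hM : ∀ a, (M a).PosSemidef)
    (hA : ∀ i j, HasSum (fun a => M a i j) (A i j)) : A.PosSemidef := by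
  refine .of_dotProduct_mulVec_nonneg ?_ fun x => ?_
  · ext i j
    refine (hA j i).star.unique ?_
    simpa only [(hM _).1.apply] using hA i j
  · have h : HasSum (fun a => star x ⬝ᵥ (M a).mulVec x) (star x ⬝ᵥ A.mulVec x) :=
      hasSum_sum fun i _ => (hasSum_sum fun j _ => (hA i j).mul_right (x j)).mul_left _
    exact h.nonneg fun a => (hM a).dotProduct_mulVec_nonneg x

/-- An `L`-series as a sum over the shifted indices `n + 1`. -/
theorem LSeries_eq_tsum_nat_add_one (f : ℕ → ℂ) (s : ℂ) :
    LSeries f s = ∑' n : ℕ, f (n + 1) * ((n + 1 : ℕ) : ℂ) ^ (-s) := by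
  have h : Function.support (LSeries.term f s) ⊆ Set.range Nat.succ := by
    intro n hn
    rcases n with _ | n
    · simp at hn
    · exact ⟨n, rfl⟩
  rw [LSeries, ← Nat.succ_injective.tsum_eq h]
  refine tsum_congr fun n => ?_
  rw [Nat.succ_eq_add_one, LSeries.term_of_ne_zero n.succ_ne_zero, Complex.cpow_neg, div_eq_mul_inv]

/-- A kernel `L(g, z i + conj (z j))` with nonnegative coefficients `g` is positive
semidefinite. -/
theorem posSemidef_LSeries_of_nonneg {ι : Type*} [Fintype ι] {g : ℕ → ℂ} (hg : ∀ n, 0 ≤ g n)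
    (z : ι → ℂ) (hs : ∀ i j, LSeriesSummable g (z i + conj (z j))) :
    (Matrix.of fun i j => LSeries g (z i + conj (z j))).PosSemidef := by
  let u (n : ℕ) (i : ι) : ℂ := if n = 0 then 0 else (n : ℂ) ^ (-z i)
  refine .of_hasSum (M := fun n => g n • Matrix.vecMulVec (u n) (star (u n)))
    (fun n => (Matrix.posSemidef_vecMulVec_self_star (u n)).smul (hg n)) fun i j => ?_
  convert! (hs i j).hasSum using 1
  funext n
  rcases eq_or_ne n 0 with rfl | hn
  · simp [u, Matrix.vecMulVec_apply]
  · have hn' : (n : ℂ) ≠ 0 := Nat.cast_ne_zero.2 hn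
    have hc : conj ((n : ℂ) ^ (-z j)) = (n : ℂ) ^ (-conj (z j)) := by
      have harg : (n : ℂ).arg ≠ Real.pi := by simp [Complex.natCast_arg, Real.pi_ne_zero.symm]
      rw [← map_neg, Complex.cpow_conj _ _ harg, Complex.conj_natCast]
    simp only [u, hn, Matrix.smul_apply, Matrix.vecMulVec_apply, Pi.star_apply, if_false,
      smul_eq_mul, LSeries.term_of_ne_zero hn, RCLike.star_def, hc]
    rw [← Complex.cpow_add _ _ hn', ← neg_add, Complex.cpow_neg, div_eq_mul_inv]

/-- Dividing an `L`-series by the zeta series amounts to taking the Möbius transform of its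
coefficients. -/
theorem LSeries_moebius_mul {f : ArithmeticFunction ℂ} {s : ℂ} (hs : 1 < s.re)
    (hf : LSeriesSummable (fun n => f n) s) :
    LSeriesSummable (fun n => ((μ : ArithmeticFunction ℂ) * f) n) s ∧
      LSeries (fun n => ((μ : ArithmeticFunction ℂ) * f) n) s =
        LSeries (fun n => f n) s / LSeries 1 s := by
  have hμ : LSeriesSummable (fun n => (μ : ArithmeticFunction ℂ) n) s := by
    simpa using ArithmeticFunction.LSeriesSummable_moebius_iff.2 hs
  refine ⟨ArithmeticFunction.LSeriesSummable_mul hμ hf, ?_⟩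
  rw [ArithmeticFunction.LSeries_mul' hμ hf,
    eq_div_iff (LSeries_one_ne_zero_of_one_lt_re hs), mul_right_comm, mul_comm (LSeries _ s)]
  simp [LSeries_one_mul_Lseries_moebius hs]

/-- If the positive weights `w_n` (with `w_1 = 1`) are multiplicative with
`w_{p^k}` decreasing in `k` for each prime `p`, and `∑ w_n⁻¹ n^{-2σ} < ∞` for every
`σ > σ_0 > 0`, then for `m = max 1 σ_0` and any points `z_1,…,z_k` with `Re z_i > m`,
the matrix `A_{ij} = (∑_{n≥1} w_n⁻¹ n^{-(z_i + conj z_j)}) / (∑_{n≥1} n^{-(z_i + conj z_j)})`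
is positive semidefinite. -/
theorem stmt_10 (w : ℕ → ℝ) (hwpos : ∀ n : ℕ, 1 ≤ n → 0 < w n) (hw1 : w 1 = 1)
    (hmult : ∀ m n : ℕ, 1 ≤ m → 1 ≤ n → Nat.Coprime m n → w (m * n) = w m * w n)
    (hdec : ∀ p k : ℕ, p.Prime → 1 ≤ k → w (p ^ k) ≤ w (p ^ (k - 1)))
    (σ₀ : ℝ) (hσ₀ : 0 < σ₀)
    (hsum : ∀ σ : ℝ, σ₀ < σ →
      Summable (fun n : ℕ => (w (n + 1))⁻¹ * ((n + 1 : ℕ) : ℝ) ^ (-(2 * σ))))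
    (k : ℕ) (z : Fin k → ℂ) (hz : ∀ i, max 1 σ₀ < (z i).re) :
    Matrix.PosSemidef (Matrix.of fun i j : Fin k =>
      (∑' n : ℕ, ((w (n + 1) : ℝ) : ℂ)⁻¹ * ((n + 1 : ℕ) : ℂ) ^ (-(z i + conj (z j)))) /
        (∑' n : ℕ, ((n + 1 : ℕ) : ℂ) ^ (-(z i + conj (z j))))) := by
  let f : ArithmeticFunction ℂ := ⟨fun n => if n = 0 then 0 else ((w n : ℝ) : ℂ)⁻¹, if_pos rfl⟩
  have hf {n : ℕ} (hn : n ≠ 0) : f n = ((w n : ℝ) : ℂ)⁻¹ := if_neg hn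
  have hfm : f.IsMultiplicative := by
    refine ArithmeticFunction.IsMultiplicative.iff_ne_zero.2
      ⟨by simp [hf one_ne_zero, hw1], fun {m n} hm hn hmn => ?_⟩
    rw [hf hm, hf hn, hf (mul_ne_zero hm hn),
      hmult m n (Nat.one_le_iff_ne_zero.2 hm) (Nat.one_le_iff_ne_zero.2 hn) hmn]
    push_cast
    rw [mul_inv]
  have hmono (p k : ℕ) (hp : p.Prime) : f (p ^ k) ≤ f (p ^ (k + 1)) := by
    rw [hf (pow_ne_zero _ hp.ne_zero), hf (pow_ne_zero _ hp.ne_zero)]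
    exact_mod_cast inv_anti₀ (hwpos _ (pow_pos hp.pos _)) (hdec p (k + 1) hp le_add_self)
  have hre (i j) : 2 * max 1 σ₀ < (z i + conj (z j)).re := by
    have hi := hz i
    have hj := hz j
    rw [Complex.add_re, Complex.conj_re]
    linarith
  have hre_one (i j) : 1 < (z i + conj (z j)).re := by
    linarith [hre i j, le_max_left 1 σ₀]
  have hfs (i j) : LSeriesSummable (fun n => f n) (z i + conj (z j)) := by
    have hσ : σ₀ < (z i + conj (z j)).re / 2 := by
      linarith [hre i j, le_max_right 1 σ₀]
    rw [LSeriesSummable, ← summable_nat_add_iff 1]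
    refine .of_norm_bounded (hsum _ hσ) fun n => le_of_eq ?_
    rw [LSeries.norm_term_eq, if_neg n.succ_ne_zero, hf n.succ_ne_zero,
      mul_div_cancel₀ _ two_ne_zero, Real.rpow_neg (Nat.cast_nonneg _), norm_inv,
      Complex.norm_of_nonneg (hwpos _ le_add_self).le, div_eq_mul_inv]
  convert! posSemidef_LSeries_of_nonneg (hfm.moebius_mul_nonneg hmono) z
    fun i j => (LSeries_moebius_mul (hre_one i j) (hfs i j)).1 using 1
  ext i j
  rw [Matrix.of_apply, Matrix.of_apply, (LSeries_moebius_mul (hre_one i j) (hfs i j)).2,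
    LSeries_eq_tsum_nat_add_one, LSeries_eq_tsum_nat_add_one]
  simp only [hf (Nat.succ_ne_zero _), Pi.one_apply, one_mul]
end

section
/- Let a : ℕ≥1 → ℂ, let 0 ≤ Δ ≤ Δ' and B ≥ 0. Suppose (i) ∑_{n=1}^∞ |a_n| n^{-σ'} < ∞ for every σ' > Δ'; and (ii) for every natural number N ≥ 1 and every complex s with Re(s) > Δ, the family (a_n n^{-s})_{n ∈ ⟨P_N⟩} is absolutely summable and |∑_{n ∈ ⟨P_N⟩} a_n n^{-s}| ≤ B. Then for every complex s with Re(s) > Δ, the partial sums ∑_{n=1}^{M} a_n n^{-s} converge as M → ∞ to a limit L(s) satisfying |L(s)| ≤ B. -/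
open Filter

open MeasureTheory FourierTransform

/-- The triangle function of half-width `X` centred at `0`. -/
noncomputable def triangle (X x : ℝ) : ℝ := max (X - |x|) 0

/-- The Fejér kernel, i.e. the Fourier transform of `triangle X` away from `0`. -/
noncomputable def fejerKernel (X ξ : ℝ) : ℝ :=
  (Real.sin (Real.pi * X * ξ) / (Real.pi * ξ)) ^ 2

lemma continuous_triangle (X : ℝ) : Continuous (triangle X) := by
  unfold triangle; fun_prop

lemma triangle_of_abs_le {X x : ℝ} (h : |x| ≤ X) : triangle X x = X - |x| :=
  max_eq_left (by linarith)

lemma triangle_of_le_abs {X x : ℝ} (h : X ≤ |x|) : triangle X x = 0 :=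
  max_eq_right (by linarith)

lemma fejerKernel_nonneg (X ξ : ℝ) : 0 ≤ fejerKernel X ξ := sq_nonneg _

lemma integrable_fejerKernel (X : ℝ) : Integrable (fejerKernel X) := by
  refine (integrable_inv_one_add_sq.const_mul (X ^ 2 + 1)).mono' ?_ (.of_forall fun ξ => ?_)
  · unfold fejerKernel
    exact Measurable.aestronglyMeasurable (by fun_prop)
  · rw [Real.norm_of_nonneg (fejerKernel_nonneg X ξ), ← div_eq_mul_inv, le_div_iff₀ (by positivity)]
    rcases eq_or_ne ξ 0 with rfl | hξ
    · simp [fejerKernel]; positivity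
    have hX : fejerKernel X ξ ≤ X ^ 2 := by
      rw [fejerKernel, div_pow, div_le_iff₀ (by positivity), ← mul_pow]
      calc Real.sin (Real.pi * X * ξ) ^ 2 ≤ (Real.pi * X * ξ) ^ 2 := Real.sin_sq_le_sq
        _ = _ := by ring
    have hone : fejerKernel X ξ * ξ ^ 2 ≤ 1 := by
      have : fejerKernel X ξ * ξ ^ 2 = Real.sin (Real.pi * X * ξ) ^ 2 / Real.pi ^ 2 := by
        rw [fejerKernel]; field_simp
      rw [this, div_le_one (by positivity)]
      have := Real.sin_sq_le_one (Real.pi * X * ξ)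
      nlinarith [Real.pi_gt_three]
    linarith

lemma integrable_triangle (X : ℝ) : Integrable (fun x => (triangle X x : ℂ)) := by
  refine Continuous.integrable_of_hasCompactSupport
    (Complex.continuous_ofReal.comp (continuous_triangle X)) ?_
  refine HasCompactSupport.intro (isCompact_Icc (a := -X) (b := X)) fun x hx => ?_
  rw [triangle_of_le_abs, Complex.ofReal_zero]
  by_contra! h
  exact hx (abs_le.1 h.le)

lemma integral_exp_mul_triangle {X : ℝ} (hX : 0 ≤ X) {c : ℂ} (hc : c ≠ 0) :
    ∫ x : ℝ, Complex.exp (c * x) * (triangle X x : ℂ) =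
      (Complex.exp (c * X) + Complex.exp (-(c * X)) - 2) / c ^ 2 := by
  have hcont : Continuous fun x : ℝ => Complex.exp (c * x) * (triangle X x : ℂ) := by
    have := continuous_triangle X
    fun_prop
  have hexp (x : ℝ) : HasDerivAt (fun x : ℝ => Complex.exp (c * x)) (Complex.exp (c * x) * c) x := by
    simpa using! ((Complex.ofRealCLM.hasDerivAt (x := x)).const_mul c).cexp
  have hid (x : ℝ) : HasDerivAt (fun x : ℝ => (x : ℂ)) 1 x := Complex.ofRealCLM.hasDerivAt
  have hright : ∫ x in (0 : ℝ)..X, Complex.exp (c * x) * (triangle X x : ℂ) =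
      Complex.exp (c * X) / c ^ 2 - (X / c + 1 / c ^ 2) := by
    have hderiv : ∀ x ∈ Set.uIcc 0 X, HasDerivAt
        (fun x : ℝ => Complex.exp (c * x) * ((X - x) / c + 1 / c ^ 2))
        (Complex.exp (c * x) * (triangle X x : ℂ)) x := by
      intro x hx
      rw [Set.uIcc_of_le hX] at hx
      refine ((hexp x).mul
        ((((hid x).const_sub (X : ℂ)).div_const c).add_const (1 / c ^ 2))).congr_deriv ?_
      rw [triangle_of_abs_le (by rw [abs_of_nonneg hx.1]; exact hx.2), abs_of_nonneg hx.1]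
      push_cast
      field_simp
      ring
    rw [intervalIntegral.integral_eq_sub_of_hasDerivAt hderiv (hcont.intervalIntegrable _ _)]
    simp [div_eq_mul_inv]
  have hleft : ∫ x in (-X)..0, Complex.exp (c * x) * (triangle X x : ℂ) =
      (X / c - 1 / c ^ 2) + Complex.exp (-(c * X)) / c ^ 2 := by
    have hderiv : ∀ x ∈ Set.uIcc (-X) 0, HasDerivAt
        (fun x : ℝ => Complex.exp (c * x) * ((X + x) / c - 1 / c ^ 2))
        (Complex.exp (c * x) * (triangle X x : ℂ)) x := by
      intro x hx
      rw [Set.uIcc_of_le (by linarith)] at hx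
      refine ((hexp x).mul
        ((((hid x).const_add (X : ℂ)).div_const c).sub_const (1 / c ^ 2))).congr_deriv ?_
      rw [triangle_of_abs_le (by rw [abs_of_nonpos hx.2]; linarith [hx.1]), abs_of_nonpos hx.2]
      push_cast
      field_simp
      ring
    rw [intervalIntegral.integral_eq_sub_of_hasDerivAt hderiv (hcont.intervalIntegrable _ _)]
    simp [div_eq_mul_inv]
  have hsupp : ∀ x ∉ Set.Ioc (-X) X, Complex.exp (c * x) * (triangle X x : ℂ) = 0 := by
    intro x hx
    rw [triangle_of_le_abs, Complex.ofReal_zero, mul_zero]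
    by_contra! h
    exact hx ⟨(abs_lt.1 h).1, (abs_lt.1 h).2.le⟩
  rw [← setIntegral_eq_integral_of_forall_compl_eq_zero hsupp,
    ← intervalIntegral.integral_of_le (by linarith),
    ← intervalIntegral.integral_add_adjacent_intervals (hcont.intervalIntegrable _ _)
      (hcont.intervalIntegrable _ _), hleft, hright]
  ring

lemma fourier_triangle {X : ℝ} (hX : 0 ≤ X) {ξ : ℝ} (hξ : ξ ≠ 0) :
    𝓕 (fun x => (triangle X x : ℂ)) ξ = (fejerKernel X ξ : ℂ) := by
  have hc : (-(2 * Real.pi * ξ) : ℂ) * Complex.I ≠ 0 := by simp [hξ, Real.pi_ne_zero]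
  have hint := integral_exp_mul_triangle hX hc
  rw [Real.fourier_real_eq_integral_exp_smul]
  convert hint using 1
  · congr 1 with x
    rw [smul_eq_mul]
    push_cast
    ring_nf
  · have harg : (-(2 * Real.pi * ξ) : ℂ) * Complex.I * X = -(2 * (Real.pi * X * ξ)) * Complex.I := by
      ring
    have hcos : Complex.exp (-(2 * (Real.pi * X * ξ)) * Complex.I)
        + Complex.exp (2 * (Real.pi * X * ξ) * Complex.I) =
        2 * (1 - 2 * Complex.sin (Real.pi * X * ξ) ^ 2) := by
      rw [← Complex.cos_two_mul_eq_one_sub, Complex.cos]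
      ring
    rw [harg, ← neg_mul (-_) Complex.I, neg_neg, hcos, fejerKernel]
    have hπ : (Real.pi : ℂ) ≠ 0 := by simp [Real.pi_ne_zero]
    have hξ' : (ξ : ℂ) ≠ 0 := by simpa using hξ
    push_cast
    rw [mul_pow, Complex.I_sq]
    field_simp
    ring

lemma integral_fejerKernel_mul_exp {X : ℝ} (hX : 0 ≤ X) (x : ℝ) :
    ∫ ξ : ℝ, (fejerKernel X ξ : ℂ) * Complex.exp ((2 * Real.pi * ξ * x : ℝ) * Complex.I) =
      (triangle X x : ℂ) := by
  have hae : 𝓕 (fun x => (triangle X x : ℂ)) =ᵐ[volume] fun ξ => (fejerKernel X ξ : ℂ) := by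
    filter_upwards [compl_mem_ae_iff.2 (measure_singleton (0 : ℝ))] with ξ hξ
    exact fourier_triangle hX hξ
  have hinv := (integrable_triangle X).fourierInv_fourier_eq
    ((integrable_fejerKernel X).ofReal.congr hae.symm)
    (v := x) (Complex.continuous_ofReal.comp (continuous_triangle X)).continuousAt
  rw [← hinv, Real.fourierInv_eq']
  refine integral_congr_ae ?_
  filter_upwards [hae] with ξ hξ
  rw [hξ, smul_eq_mul, mul_comm]
  congr 4
  simp [mul_comm, mul_assoc]

lemma integral_fejerKernel {X : ℝ} (hX : 0 ≤ X) : ∫ ξ, fejerKernel X ξ = X := by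
  have h := integral_fejerKernel_mul_exp hX 0
  simp only [mul_zero, Complex.ofReal_zero, zero_mul, Complex.exp_zero, mul_one,
    integral_complex_ofReal] at h
  rw [triangle_of_abs_le (by simpa using hX)] at h
  simpa using Complex.ofReal_injective h

lemma abs_sin_pi_mul_le {ε u : ℝ} (hε : 0 ≤ ε) (hε1 : ε ≤ 1) (hu : 0 < u) :
    |Real.sin (Real.pi * u)| ≤ Real.pi ^ 2 * u ^ (1 - ε) := by
  have hπ := Real.pi_gt_three
  rcases le_total u 1 with h | h
  · have hpow : u ≤ u ^ (1 - ε) := by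
      simpa using Real.rpow_le_rpow_of_exponent_ge hu h (by linarith : 1 - ε ≤ 1)
    calc |Real.sin (Real.pi * u)| ≤ |Real.pi * u| := Real.abs_sin_le_abs
      _ = Real.pi * u := abs_of_pos (by positivity)
      _ ≤ Real.pi ^ 2 * u ^ (1 - ε) := by gcongr; nlinarith
  · have hpow : 1 ≤ u ^ (1 - ε) := Real.one_le_rpow h (by linarith)
    have := Real.abs_sin_le_one (Real.pi * u)
    nlinarith

lemma abs_sub_fejerKernel_div_le {ε X Y : ℝ} (hε : 0 < ε) (hε1 : ε ≤ 1) (hX : 0 ≤ X) (hXY : X < Y)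
    (ξ : ℝ) :
    |(fejerKernel Y ξ - fejerKernel X ξ) / (Y - X)| ≤
      (X + Y + (Y - X) ^ (-ε)) * (4 * (1 + ‖ξ‖) ^ (-(1 + ε))) := by
  have hδ : 0 < Y - X := by linarith
  have hδε : 0 < (Y - X) ^ (-ε) := Real.rpow_pos_of_pos hδ _
  rcases eq_or_ne ξ 0 with rfl | hξ
  · have : 0 ≤ X + Y := by linarith
    simp [fejerKernel]
    positivity
  have hξ' : 0 < |ξ| := abs_pos.2 hξ
  have hπ := Real.pi_pos
  have hprod : |(fejerKernel Y ξ - fejerKernel X ξ) / (Y - X)| =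
      |Real.sin (Real.pi * ((X + Y) * ξ))| * |Real.sin (Real.pi * ((Y - X) * |ξ|))| /
        (Real.pi ^ 2 * |ξ| ^ 2 * (Y - X)) := by
    have hsin : |Real.sin (Real.pi * ((Y - X) * |ξ|))| = |Real.sin (Real.pi * ((Y - X) * ξ))| := by
      rcases abs_choice ξ with h | h <;> simp [h]
    have hid : fejerKernel Y ξ - fejerKernel X ξ =
        Real.sin (Real.pi * ((X + Y) * ξ)) * Real.sin (Real.pi * ((Y - X) * ξ)) /
          (Real.pi ^ 2 * |ξ| ^ 2) := by
      have h1 : Real.pi * ((X + Y) * ξ) = Real.pi * Y * ξ + Real.pi * X * ξ := by ring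
      have h2 : Real.pi * ((Y - X) * ξ) = Real.pi * Y * ξ - Real.pi * X * ξ := by ring
      rw [h1, h2, Real.sin_add, Real.sin_sub, fejerKernel, fejerKernel, sq_abs, div_pow, div_pow,
        mul_pow, ← sub_div]
      congr 1
      linear_combination Real.sin (Real.pi * X * ξ) ^ 2 *
          Real.sin_sq_add_cos_sq (Real.pi * Y * ξ)
        - Real.sin (Real.pi * Y * ξ) ^ 2 * Real.sin_sq_add_cos_sq (Real.pi * X * ξ)
    rw [hsin, hid, div_div, abs_div, abs_mul, abs_of_pos (by positivity : 0 <
      Real.pi ^ 2 * |ξ| ^ 2 * (Y - X))]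
  rw [hprod, Real.norm_eq_abs]
  have hpos : 0 < 1 + |ξ| := by linarith
  have hfour : (2 : ℝ) ^ (1 + ε) ≤ 4 := by
    calc (2 : ℝ) ^ (1 + ε) ≤ 2 ^ (2 : ℝ) :=
          Real.rpow_le_rpow_of_exponent_le (by norm_num) (by linarith)
      _ = 4 := by norm_num
  rcases le_total |ξ| 1 with h | h
  · have hone : 1 ≤ 4 * (1 + |ξ|) ^ (-(1 + ε)) := by
      rw [Real.rpow_neg hpos.le, ← div_eq_mul_inv, one_le_div (by positivity)]
      exact (Real.rpow_le_rpow hpos.le (by linarith) (by linarith)).trans hfour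
    have hsmall : |Real.sin (Real.pi * ((X + Y) * ξ))| * |Real.sin (Real.pi * ((Y - X) * |ξ|))| /
        (Real.pi ^ 2 * |ξ| ^ 2 * (Y - X)) ≤ X + Y := by
      rw [div_le_iff₀ (by positivity)]
      calc _ ≤ |Real.pi * ((X + Y) * ξ)| * |Real.pi * ((Y - X) * |ξ|)| := by
            exact mul_le_mul Real.abs_sin_le_abs Real.abs_sin_le_abs (abs_nonneg _) (abs_nonneg _)
        _ = _ := by
            rw [abs_mul, abs_mul, abs_mul, abs_mul, abs_abs, abs_of_pos hπ, abs_of_pos hδ,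
              abs_of_nonneg (by linarith : 0 ≤ X + Y)]
            ring
    nlinarith
  · have hone : |ξ| ^ (-(1 + ε)) ≤ 4 * (1 + |ξ|) ^ (-(1 + ε)) := by
      rw [Real.rpow_neg hpos.le, Real.rpow_neg hξ'.le, ← div_eq_mul_inv, inv_eq_one_div,
        div_le_div_iff₀ (by positivity) (by positivity), one_mul]
      calc (1 + |ξ|) ^ (1 + ε) ≤ (2 * |ξ|) ^ (1 + ε) := by gcongr; linarith
        _ = 2 ^ (1 + ε) * |ξ| ^ (1 + ε) := Real.mul_rpow (by norm_num) hξ'.le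
        _ ≤ _ := by gcongr
    have hlarge : |Real.sin (Real.pi * ((X + Y) * ξ))| * |Real.sin (Real.pi * ((Y - X) * |ξ|))| /
        (Real.pi ^ 2 * |ξ| ^ 2 * (Y - X)) ≤ (Y - X) ^ (-ε) * |ξ| ^ (-(1 + ε)) := by
      rw [div_le_iff₀ (by positivity)]
      calc _ ≤ 1 * (Real.pi ^ 2 * ((Y - X) * |ξ|) ^ (1 - ε)) := by
            gcongr
            · exact Real.abs_sin_le_one _
            · exact abs_sin_pi_mul_le hε.le hε1 (by positivity)
        _ = _ := by
            rw [Real.mul_rpow hδ.le hξ'.le, sub_eq_add_neg 1 ε, Real.rpow_add hδ, Real.rpow_add hξ',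
              Real.rpow_one, Real.rpow_one, neg_add, Real.rpow_add hξ', Real.rpow_neg_one]
            field_simp
    calc _ ≤ (Y - X) ^ (-ε) * |ξ| ^ (-(1 + ε)) := hlarge
      _ ≤ _ := mul_le_mul (by linarith) hone (by positivity) (by linarith)

lemma integral_abs_sub_fejerKernel_div_le {ε X Y : ℝ} (hε : 0 < ε) (hε1 : ε ≤ 1) (hX : 0 ≤ X)
    (hXY : X < Y) :
    ∫ ξ, |(fejerKernel Y ξ - fejerKernel X ξ) / (Y - X)| ≤
      (X + Y + (Y - X) ^ (-ε)) * (4 * ∫ ξ : ℝ, (1 + ‖ξ‖) ^ (-(1 + ε))) := by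
  rw [← integral_const_mul, ← integral_const_mul]
  refine integral_mono ?_ ?_ (abs_sub_fejerKernel_div_le hε hε1 hX hXY)
  · exact (((integrable_fejerKernel Y).sub (integrable_fejerKernel X)).div_const _).abs
  · exact ((integrable_one_add_norm (by simpa using hε)).const_mul 4).const_mul _

lemma natCast_cpow_neg_mul_exp {n : ℕ} (hn : n ≠ 0) (s : ℂ) (ξ : ℝ) :
    (n : ℂ) ^ (-s) * Complex.exp ((2 * Real.pi * ξ * Real.log n : ℝ) * Complex.I) =
      (n : ℂ) ^ (-(s - (2 * Real.pi * ξ : ℝ) * Complex.I)) := by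
  have hn' : (n : ℂ) ≠ 0 := by exact_mod_cast hn
  rw [Complex.cpow_def_of_ne_zero hn', Complex.cpow_def_of_ne_zero hn', ← Complex.exp_add,
    ← Complex.natCast_log]
  congr 1
  push_cast
  ring

/-- Weighting a Dirichlet series by the Fourier transform of `K` multiplies a bound on a vertical
line by at most the `L¹` norm of `K`. -/
lemma norm_tsum_mul_le_of_vertical_bound {S : Set ℕ} (hS : 0 ∉ S) {a : ℕ → ℂ} {s : ℂ} {B : ℝ}
    (hsum : Summable fun n : S => ‖a n * ((n : ℕ) : ℂ) ^ (-s)‖)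
    (hbound : ∀ t : ℝ, ‖∑' n : S, a n * ((n : ℕ) : ℂ) ^ (-(s - t * Complex.I))‖ ≤ B)
    {K W : ℝ → ℝ} (hK : Integrable K)
    (hW : ∀ x : ℝ, ∫ ξ, (K ξ : ℂ) * Complex.exp ((2 * Real.pi * ξ * x : ℝ) * Complex.I) = W x) :
    ‖∑' n : S, a n * ((n : ℕ) : ℂ) ^ (-s) * W (Real.log n)‖ ≤ B * ∫ ξ, |K ξ| := by
  let F : S → ℝ → ℂ := fun n ξ => a n * ((n : ℕ) : ℂ) ^ (-s) *
    ((K ξ : ℂ) * Complex.exp ((2 * Real.pi * ξ * Real.log n : ℝ) * Complex.I))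
  have hnorm (n : S) (ξ : ℝ) : ‖F n ξ‖ = ‖a n * ((n : ℕ) : ℂ) ^ (-s)‖ * |K ξ| := by
    simp only [F, norm_mul, Complex.norm_exp_ofReal_mul_I, mul_one, Complex.norm_real,
      Real.norm_eq_abs]
  have hint (n : S) : Integrable (F n) := by
    refine Integrable.const_mul ?_ _
    refine hK.ofReal.mul_bdd (c := 1) (Continuous.aestronglyMeasurable (by fun_prop))
      (.of_forall fun ξ => (Complex.norm_exp_ofReal_mul_I _).le)
  have hhas := hasSum_integral_of_summable_integral_norm hint
    (by simpa only [hnorm, integral_const_mul] using hsum.mul_right (∫ ξ, |K ξ|))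
  have hterm (n : S) : ∫ ξ, F n ξ = a n * ((n : ℕ) : ℂ) ^ (-s) * W (Real.log n) := by
    simp only [F, integral_const_mul, hW]
  simp only [hterm] at hhas
  rw [hhas.tsum_eq, ← integral_const_mul]
  refine norm_integral_le_of_norm_le (hK.abs.const_mul B) (.of_forall fun ξ => ?_)
  have hF (n : S) : F n ξ = K ξ *
      (a n * ((n : ℕ) : ℂ) ^ (-(s - (2 * Real.pi * ξ : ℝ) * Complex.I))) := by
    rw [← natCast_cpow_neg_mul_exp (fun h => hS (h ▸ n.2))]
    simp only [F]
    ring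
  simp only [hF]
  rw [tsum_mul_left, norm_mul, Complex.norm_real, Real.norm_eq_abs, mul_comm]
  gcongr
  exact hbound _

lemma mem_smoothSet_of_lt {n N : ℕ} (hn : 0 < n) (hnN : n < N) : n ∈ smoothSet N := by
  refine ⟨hn, fun p hp hpn => ⟨Nat.count Nat.Prime p, ?_, (Nat.nth_count hp).symm⟩⟩
  exact ((Nat.count_le (p := Nat.Prime) (n := p)).trans (Nat.le_of_dvd hn hpn)).trans_lt hnN

/-- If all the projections of a Dirichlet series are bounded by `B` on a half-plane, a truncation
weighted by the Fourier transform of `K` is bounded by `B` times the `L¹` norm of `K`. -/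
lemma norm_sum_range_mul_le {a : ℕ → ℂ} {Δ B : ℝ}
    (hproj : ∀ N : ℕ, 1 ≤ N → ∀ s : ℂ, Δ < s.re →
      Summable (fun n : smoothSet N => ‖a n * ((n : ℕ) : ℂ) ^ (-s)‖) ∧
        ‖∑' n : smoothSet N, a n * ((n : ℕ) : ℂ) ^ (-s)‖ ≤ B)
    {s : ℂ} (hs : Δ < s.re) {K W : ℝ → ℝ} (hK : Integrable K)
    (hW : ∀ x : ℝ, ∫ ξ, (K ξ : ℂ) * Complex.exp ((2 * Real.pi * ξ * x : ℝ) * Complex.I) = W x)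
    {M : ℕ} (hM : ∀ n : ℕ, M < n → W (Real.log n) = 0) :
    ‖∑ n ∈ Finset.range M, a (n + 1) * ((n + 1 : ℕ) : ℂ) ^ (-s) * W (Real.log (n + 1 : ℕ))‖ ≤
      B * ∫ ξ, |K ξ| := by
  have hS : 0 ∉ smoothSet (M + 1) := fun h => lt_irrefl 0 h.1
  have hmain := norm_tsum_mul_le_of_vertical_bound hS (hproj (M + 1) (by lia) s hs).1
    (fun t => (hproj (M + 1) (by lia) (s - t * Complex.I) (by simpa using hs)).2) hK hW
  convert hmain using 2
  let f : ℕ → ℂ := fun n => a n * (n : ℂ) ^ (-s) * W (Real.log n)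
  have himage : ∑ n ∈ Finset.range M, f (n + 1) = ∑ n ∈ Finset.Ico 1 (M + 1), f n := by
    rw [Finset.sum_Ico_eq_sum_range]
    simp [add_comm]
  change ∑ n ∈ Finset.range M, f (n + 1) = ∑' n : smoothSet (M + 1), f n
  rw [himage, tsum_subtype (smoothSet (M + 1)) f, tsum_eq_sum (s := Finset.Ico 1 (M + 1))]
  · refine Finset.sum_congr rfl fun n hn => ?_
    rw [Finset.mem_Ico] at hn
    rw [Set.indicator_of_mem (mem_smoothSet_of_lt hn.1 hn.2)]
  · intro n hn
    rw [Finset.mem_Ico] at hn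
    by_cases hmem : n ∈ smoothSet (M + 1)
    · have := hmem.1
      simp [f, hM n (by lia)]
    · rw [Set.indicator_of_notMem hmem]

/-- The partial sums of a Dirichlet series whose projections are bounded on a half-plane grow more
slowly than any power. -/
lemma exists_norm_sum_range_le_rpow {a : ℕ → ℂ} {Δ B : ℝ} (hB : 0 ≤ B)
    (hproj : ∀ N : ℕ, 1 ≤ N → ∀ s : ℂ, Δ < s.re →
      Summable (fun n : smoothSet N => ‖a n * ((n : ℕ) : ℂ) ^ (-s)‖) ∧
        ‖∑' n : smoothSet N, a n * ((n : ℕ) : ℂ) ^ (-s)‖ ≤ B)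
    {s : ℂ} (hs : Δ < s.re) {ε : ℝ} (hε : 0 < ε) (hε1 : ε ≤ 1) :
    ∃ C : ℝ, ∀ M : ℕ,
      ‖∑ n ∈ Finset.range M, a (n + 1) * ((n + 1 : ℕ) : ℂ) ^ (-s)‖ ≤ C * (M + 1 : ℝ) ^ ε := by
  set J : ℝ := 4 * ∫ ξ : ℝ, (1 + ‖ξ‖) ^ (-(1 + ε))
  have hJ0 : 0 ≤ J := mul_nonneg (by norm_num) (integral_nonneg fun ξ => by positivity)
  refine ⟨B * ((2 / ε + 1) * J), fun M => ?_⟩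
  rcases Nat.eq_zero_or_pos M with rfl | hM
  · simp
    positivity
  have hM1 : (1 : ℝ) ≤ M := by exact_mod_cast hM
  set X := Real.log M with hXdef
  set Y := Real.log (M + 1) with hYdef
  have hX : 0 ≤ X := Real.log_nonneg hM1
  have hXY : X < Y := Real.log_lt_log (by linarith) (by linarith)
  have hδ : 0 < Y - X := by linarith
  let W : ℝ → ℝ := fun x => (triangle Y x - triangle X x) / (Y - X)
  have hW (x : ℝ) : ∫ ξ, (((fejerKernel Y ξ - fejerKernel X ξ) / (Y - X) : ℝ) : ℂ) *
      Complex.exp ((2 * Real.pi * ξ * x : ℝ) * Complex.I) = W x := by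
    have hint (Z : ℝ) : Integrable fun ξ : ℝ => (fejerKernel Z ξ : ℂ) *
        Complex.exp ((2 * Real.pi * ξ * x : ℝ) * Complex.I) :=
      (integrable_fejerKernel Z).ofReal.mul_bdd (c := 1)
        (Continuous.aestronglyMeasurable (by fun_prop))
        (.of_forall fun ξ => (Complex.norm_exp_ofReal_mul_I _).le)
    simp only [W, Complex.ofReal_div, Complex.ofReal_sub]
    rw [← integral_fejerKernel_mul_exp hX, ← integral_fejerKernel_mul_exp (hX.trans hXY.le),
      ← integral_sub (hint Y) (hint X), ← integral_div]
    congr 1 with ξ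
    ring
  have hWzero (n : ℕ) (hn : M < n) : W (Real.log n) = 0 := by
    have hn' : (M + 1 : ℝ) ≤ n := by exact_mod_cast hn
    have hYn : Y ≤ |Real.log n| :=
      (Real.log_le_log (by linarith) hn').trans (le_abs_self _)
    simp [W, triangle_of_le_abs hYn, triangle_of_le_abs (hXY.le.trans hYn)]
  have hWone (n : ℕ) (hn : n < M) : W (Real.log (n + 1 : ℕ)) = 1 := by
    have hnM : ((n + 1 : ℕ) : ℝ) ≤ M := by exact_mod_cast hn
    have hn1 : (1 : ℝ) ≤ (n + 1 : ℕ) := by exact_mod_cast Nat.le_add_left 1 n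
    have hXn : |Real.log (n + 1 : ℕ)| ≤ X := by
      rw [abs_of_nonneg (Real.log_nonneg hn1)]
      exact Real.log_le_log (by linarith) hnM
    simp only [W]
    rw [triangle_of_abs_le hXn, triangle_of_abs_le (hXn.trans hXY.le), sub_sub_sub_cancel_right,
      div_self hδ.ne']
  have hbound := norm_sum_range_mul_le hproj hs
    (((integrable_fejerKernel Y).sub (integrable_fejerKernel X)).div_const (Y - X)) hW hWzero
  have hsum : ∑ n ∈ Finset.range M,
      a (n + 1) * ((n + 1 : ℕ) : ℂ) ^ (-s) * W (Real.log (n + 1 : ℕ)) =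
      ∑ n ∈ Finset.range M, a (n + 1) * ((n + 1 : ℕ) : ℂ) ^ (-s) :=
    Finset.sum_congr rfl fun n hn => by rw [hWone n (Finset.mem_range.1 hn)]; simp
  rw [hsum] at hbound
  have hYle : Y ≤ (M + 1 : ℝ) ^ ε / ε := Real.log_le_rpow_div (by linarith) hε
  have hgap : (M + 1 : ℝ)⁻¹ ≤ Y - X := by
    rw [hYdef, hXdef, ← Real.log_div (by linarith) (by linarith)]
    refine le_trans (le_of_eq ?_) (Real.one_sub_inv_le_log_of_pos (by positivity))
    field_simp
    ring
  have hgapε : (Y - X) ^ (-ε) ≤ (M + 1 : ℝ) ^ ε := by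
    calc (Y - X) ^ (-ε) ≤ ((M + 1 : ℝ)⁻¹) ^ (-ε) :=
          Real.rpow_le_rpow_of_nonpos (by positivity) hgap (by linarith)
      _ = (M + 1 : ℝ) ^ ε := by
          rw [Real.inv_rpow (by positivity), Real.rpow_neg (by positivity), inv_inv]
  calc _ ≤ B * ((X + Y + (Y - X) ^ (-ε)) * J) :=
        hbound.trans (mul_le_mul_of_nonneg_left
          (integral_abs_sub_fejerKernel_div_le hε hε1 hX hXY) hB)
    _ ≤ B * (((2 / ε + 1) * (M + 1 : ℝ) ^ ε) * J) := by
        gcongr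
        have : (2 / ε + 1) * (M + 1 : ℝ) ^ ε =
            2 * ((M + 1 : ℝ) ^ ε / ε) + (M + 1 : ℝ) ^ ε := by ring
        linarith
    _ = _ := by ring

/-- A series whose partial sums are `O(1 / p M)` converges after multiplication by `p ^ 2`, for `p`
slowly decreasing to `0`. -/
lemma exists_tendsto_sum_sq_mul {p : ℕ → ℝ} (hpos : ∀ n, 0 < p n) (hanti : Antitone p)
    (hlim : Tendsto p atTop (nhds 0)) (hdouble : ∀ n, p n ≤ 2 * p (n + 1)) {c : ℕ → ℂ} {C : ℝ}
    (hC : ∀ M, ‖∑ n ∈ Finset.range M, c n‖ * p M ≤ C) :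
    ∃ L : ℂ, Tendsto (fun M => ∑ n ∈ Finset.range M, ((p n ^ 2 : ℝ) : ℂ) * c n) atTop (nhds L) := by
  set A : ℕ → ℂ := fun M => ∑ n ∈ Finset.range M, c n with hA
  have hparts (M : ℕ) : ∑ n ∈ Finset.range M, ((p n ^ 2 : ℝ) : ℂ) * c n =
      ((p M ^ 2 : ℝ) : ℂ) * A M +
        ∑ n ∈ Finset.range M, ((p n ^ 2 - p (n + 1) ^ 2 : ℝ) : ℂ) * A (n + 1) := by
    induction M with
    | zero => simp [hA]
    | succ M ih =>
      have hsucc : A (M + 1) = A M + c M := Finset.sum_range_succ _ _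
      rw [Finset.sum_range_succ, Finset.sum_range_succ, ih, hsucc]
      push_cast
      ring
  have hboundary : Tendsto (fun M => ((p M ^ 2 : ℝ) : ℂ) * A M) atTop (nhds 0) := by
    refine squeeze_zero_norm (fun M => ?_) (by simpa using hlim.mul_const C)
    rw [norm_mul, Complex.norm_real, Real.norm_of_nonneg (by positivity)]
    calc p M ^ 2 * ‖A M‖ = p M * (‖A M‖ * p M) := by ring
      _ ≤ p M * C := mul_le_mul_of_nonneg_left (hC M) (hpos M).le
  have hC0 : 0 ≤ C := (mul_nonneg (norm_nonneg _) (hpos 0).le).trans (hC 0)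
  have htele : Summable fun n => p n - p (n + 1) := by
    refine summable_of_sum_range_le (c := p 0) (fun n => sub_nonneg.2 (hanti n.le_succ))
      fun n => ?_
    rw [Finset.sum_range_sub']
    linarith [hpos n]
  have hsummable : Summable fun n => ((p n ^ 2 - p (n + 1) ^ 2 : ℝ) : ℂ) * A (n + 1) := by
    refine Summable.of_norm_bounded (htele.mul_left (3 * C)) fun n => ?_
    have hle : 0 ≤ p n - p (n + 1) := sub_nonneg.2 (hanti n.le_succ)
    have hn := hpos n
    have hn' := hpos (n + 1)
    rw [norm_mul, Complex.norm_real, Real.norm_of_nonneg (by nlinarith)]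
    calc (p n ^ 2 - p (n + 1) ^ 2) * ‖A (n + 1)‖
        = (p n - p (n + 1)) * (p n + p (n + 1)) * ‖A (n + 1)‖ := by ring
      _ ≤ (p n - p (n + 1)) * (3 * p (n + 1)) * ‖A (n + 1)‖ := by
          gcongr
          linarith [hdouble n]
      _ = 3 * (p n - p (n + 1)) * (‖A (n + 1)‖ * p (n + 1)) := by ring
      _ ≤ 3 * (p n - p (n + 1)) * C := by gcongr; exact hC _
      _ = _ := by ring
  exact ⟨_, (hboundary.add hsummable.hasSum.tendsto_sum_nat).congr fun M => (hparts M).symm⟩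

/-- Logarithmic Riesz means of a convergent series converge to its sum. -/
lemma tendsto_logarithmic_riesz_mean {c : ℕ → ℂ} {L : ℂ}
    (hL : Tendsto (fun M => ∑ n ∈ Finset.range M, c n) atTop (nhds L)) :
    Tendsto (fun M : ℕ => (∑ n ∈ Finset.range M,
      c n * ((Real.log (M + 1 : ℕ) - Real.log (n + 1 : ℕ) : ℝ) : ℂ)) /
        (Real.log (M + 1 : ℕ) : ℂ)) atTop (nhds L) := by
  set A : ℕ → ℂ := fun M => ∑ n ∈ Finset.range M, c n with hA
  let g : ℕ → ℝ := fun n => Real.log (n + 2 : ℕ) - Real.log (n + 1 : ℕ)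
  have hgsum (M : ℕ) : ∑ n ∈ Finset.range M, g n = Real.log (M + 1 : ℕ) := by
    rw [Finset.sum_range_sub (fun n : ℕ => Real.log (n + 1 : ℕ))]
    simp
  have hlog : Tendsto (fun M : ℕ => Real.log (M + 1 : ℕ)) atTop atTop :=
    Real.tendsto_log_atTop.comp (tendsto_natCast_atTop_atTop.comp (tendsto_add_atTop_nat 1))
  have hg : 0 ≤ g := fun n => sub_nonneg.2
    (Real.log_le_log (by positivity) (by exact_mod_cast Nat.le_succ _))
  have hparts (M : ℕ) : ∑ n ∈ Finset.range M,
      c n * ((Real.log (M + 1 : ℕ) - Real.log (n + 1 : ℕ) : ℝ) : ℂ) =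
      ∑ n ∈ Finset.range M, (g n : ℂ) * A (n + 1) := by
    induction M with
    | zero => simp
    | succ M ih =>
      have hstep : ∑ n ∈ Finset.range (M + 1),
          c n * ((Real.log (M + 1 + 1 : ℕ) - Real.log (n + 1 : ℕ) : ℝ) : ℂ) =
          ∑ n ∈ Finset.range (M + 1),
            c n * ((Real.log (M + 1 : ℕ) - Real.log (n + 1 : ℕ) : ℝ) : ℂ) +
          (g M : ℂ) * A (M + 1) := by
        rw [hA, Finset.mul_sum, ← Finset.sum_add_distrib]
        refine Finset.sum_congr rfl fun n _ => ?_
        simp only [g]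
        push_cast
        ring_nf
      rw [hstep, Finset.sum_range_succ, Finset.sum_range_succ _ M, ih]
      simp
  have hsmall : (fun n => (g n : ℂ) * (A (n + 1) - L)) =o[atTop] g := by
    have h1 : (fun n => A (n + 1) - L) =o[atTop] (fun _ => (1 : ℝ)) := by
      rw [Asymptotics.isLittleO_one_iff]
      simpa using ((tendsto_add_atTop_iff_nat 1).2 hL).sub_const L
    have h2 : (fun n => (g n : ℂ)) =O[atTop] g := by
      refine Asymptotics.isBigO_of_le _ fun n => ?_
      rw [Complex.norm_real]
    simpa using h2.mul_isLittleO h1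
  have hlittle := hsmall.sum_range hg (by simpa only [hgsum] using hlog)
  simp only [hgsum] at hlittle
  have hzero : Tendsto (fun M : ℕ => (∑ n ∈ Finset.range M, (g n : ℂ) * (A (n + 1) - L)) /
      (Real.log (M + 1 : ℕ) : ℂ)) atTop (nhds 0) := by
    refine Asymptotics.IsLittleO.tendsto_div_nhds_zero ?_
    refine hlittle.trans_le fun M => ?_
    rw [Complex.norm_real]
  have hadd := hzero.add_const L
  rw [zero_add] at hadd
  refine hadd.congr' ?_
  filter_upwards [eventually_gt_atTop 0] with M hM
  have hne : (Real.log (M + 1 : ℕ) : ℂ) ≠ 0 := by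
    rw [Complex.ofReal_ne_zero]
    exact (Real.log_pos (by exact_mod_cast Nat.lt_add_of_pos_left hM)).ne'
  have hgL : ∑ n ∈ Finset.range M, (g n : ℂ) * L = (Real.log (M + 1 : ℕ) : ℂ) * L := by
    rw [← Finset.sum_mul, ← hgsum M, Complex.ofReal_sum]
  rw [hparts]
  simp only [mul_sub, Finset.sum_sub_distrib, hgL]
  field_simp
  ring

/-- Logarithmic Riesz means of a Dirichlet series obey the bound of its projections. -/
lemma norm_logarithmic_riesz_mean_le {a : ℕ → ℂ} {Δ B : ℝ} (hB : 0 ≤ B)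
    (hproj : ∀ N : ℕ, 1 ≤ N → ∀ s : ℂ, Δ < s.re →
      Summable (fun n : smoothSet N => ‖a n * ((n : ℕ) : ℂ) ^ (-s)‖) ∧
        ‖∑' n : smoothSet N, a n * ((n : ℕ) : ℂ) ^ (-s)‖ ≤ B)
    {s : ℂ} (hs : Δ < s.re) (M : ℕ) :
    ‖(∑ n ∈ Finset.range M, a (n + 1) * ((n + 1 : ℕ) : ℂ) ^ (-s) *
      ((Real.log (M + 1 : ℕ) - Real.log (n + 1 : ℕ) : ℝ) : ℂ)) /
        (Real.log (M + 1 : ℕ) : ℂ)‖ ≤ B := by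
  set X := Real.log (M + 1 : ℕ) with hXdef
  have hX : 0 ≤ X := Real.log_natCast_nonneg _
  have hbound := norm_sum_range_mul_le hproj hs (integrable_fejerKernel X)
    (integral_fejerKernel_mul_exp hX) (M := M) fun n hn => triangle_of_le_abs
      ((Real.log_le_log (by positivity) (by exact_mod_cast hn)).trans (le_abs_self _))
  simp only [abs_of_nonneg (fejerKernel_nonneg X _), integral_fejerKernel hX] at hbound
  have hsum : ∑ n ∈ Finset.range M,
      a (n + 1) * ((n + 1 : ℕ) : ℂ) ^ (-s) * (triangle X (Real.log (n + 1 : ℕ)) : ℂ) =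
      ∑ n ∈ Finset.range M, a (n + 1) * ((n + 1 : ℕ) : ℂ) ^ (-s) *
        ((X - Real.log (n + 1 : ℕ) : ℝ) : ℂ) := by
    refine Finset.sum_congr rfl fun n hn => ?_
    have hn' : n + 1 ≤ M + 1 := by have := Finset.mem_range.1 hn; lia
    have habs : |Real.log (n + 1 : ℕ)| = Real.log (n + 1 : ℕ) :=
      abs_of_nonneg (Real.log_natCast_nonneg _)
    rw [triangle_of_abs_le, habs]
    rw [habs]
    exact Real.log_le_log (by positivity) (by exact_mod_cast hn')
  rw [hsum] at hbound
  rw [norm_div, Complex.norm_real, Real.norm_of_nonneg hX]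
  exact div_le_of_le_mul₀ hX hB hbound

lemma tendsto_add_one_rpow_neg {ε : ℝ} (hε : 0 < ε) :
    Tendsto (fun n : ℕ => (n + 1 : ℝ) ^ (-ε)) atTop (nhds 0) :=
  (tendsto_rpow_neg_atTop hε).comp
    (tendsto_atTop_add_const_right _ 1 tendsto_natCast_atTop_atTop)

lemma antitone_add_one_rpow_neg {ε : ℝ} (hε : 0 < ε) :
    Antitone fun n : ℕ => (n + 1 : ℝ) ^ (-ε) := fun m n hmn =>
  Real.rpow_le_rpow_of_nonpos (by positivity) (by gcongr) (by linarith)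

lemma add_one_rpow_neg_le_two_mul {ε : ℝ} (hε : 0 < ε) (hε1 : ε ≤ 1) (n : ℕ) :
    (n + 1 : ℝ) ^ (-ε) ≤ 2 * ((n + 1 : ℕ) + 1 : ℝ) ^ (-ε) := by
  have hn : (0 : ℝ) ≤ n := n.cast_nonneg
  rw [Real.rpow_neg (by positivity), Real.rpow_neg (by positivity), ← div_eq_mul_inv,
    inv_eq_one_div, div_le_div_iff₀ (by positivity) (by positivity), one_mul]
  calc ((n + 1 : ℕ) + 1 : ℝ) ^ ε ≤ (2 * (n + 1 : ℝ)) ^ ε := by gcongr; push_cast; linarith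
    _ = 2 ^ ε * (n + 1 : ℝ) ^ ε := Real.mul_rpow (by norm_num) (by positivity)
    _ ≤ 2 * (n + 1 : ℝ) ^ ε := by
        gcongr
        simpa using Real.rpow_le_rpow_of_exponent_le (by norm_num : (1 : ℝ) ≤ 2) hε1

/-- If the Dirichlet series `∑ a_n n^{-s}` converges absolutely for `Re s > Δ'` and
each projection `∑_{n ∈ ⟨P_N⟩} a_n n^{-s}` is absolutely summable and bounded by `B`
on `Re s > Δ`, then for each `s` with `Re s > Δ` the partial sums of the Dirichlet
series converge to a limit of modulus at most `B`. -/
theorem stmt_11 (a : ℕ → ℂ) (Δ Δ' B : ℝ) (hΔ : 0 ≤ Δ) (hΔ' : Δ ≤ Δ') (hB : 0 ≤ B)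
    (habs : ∀ σ' : ℝ, Δ' < σ' →
      Summable (fun n : ℕ => ‖a (n + 1)‖ * ((n + 1 : ℕ) : ℝ) ^ (-σ')))
    (hproj : ∀ N : ℕ, 1 ≤ N → ∀ s : ℂ, Δ < s.re →
      Summable (fun n : smoothSet N => ‖a n * ((n : ℕ) : ℂ) ^ (-s)‖) ∧
        ‖∑' n : smoothSet N, a n * ((n : ℕ) : ℂ) ^ (-s)‖ ≤ B) :
    ∀ s : ℂ, Δ < s.re → ∃ L : ℂ,
      Tendsto (fun M : ℕ => ∑ n ∈ Finset.range M, a (n + 1) * ((n + 1 : ℕ) : ℂ) ^ (-s))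
        atTop (nhds L) ∧ ‖L‖ ≤ B := by
  intro s hs
  obtain ⟨ε, hε, hεs⟩ : ∃ ε : ℝ, (0 < ε ∧ ε ≤ 1) ∧ Δ < s.re - 2 * ε :=
    ⟨min 1 ((s.re - Δ) / 4), ⟨lt_min one_pos (by linarith), min_le_left _ _⟩,
      by linarith [min_le_right 1 ((s.re - Δ) / 4)]⟩
  obtain ⟨C, hC⟩ := exists_norm_sum_range_le_rpow hB hproj (s := s - (2 * ε : ℝ))
    (by simpa only [Complex.sub_re, Complex.ofReal_re] using hεs) hε.1 hε.2
  obtain ⟨L, hL⟩ := exists_tendsto_sum_sq_mul (p := fun n : ℕ => (n + 1 : ℝ) ^ (-ε))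
    (fun n => by positivity) (antitone_add_one_rpow_neg hε.1) (tendsto_add_one_rpow_neg hε.1)
    (add_one_rpow_neg_le_two_mul hε.1 hε.2) (C := C) fun M => by
      rw [Real.rpow_neg (by positivity), ← div_eq_mul_inv, div_le_iff₀ (by positivity)]
      exact hC M
  have hterm (n : ℕ) : ((((n + 1 : ℝ) ^ (-ε)) ^ 2 : ℝ) : ℂ) *
      (a (n + 1) * ((n + 1 : ℕ) : ℂ) ^ (-(s - (2 * ε : ℝ)))) =
      a (n + 1) * ((n + 1 : ℕ) : ℂ) ^ (-s) := by
    have hn : ((n + 1 : ℕ) : ℂ) ≠ 0 := by exact_mod_cast n.succ_ne_zero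
    have hsq : ((((n + 1 : ℝ) ^ (-ε)) ^ 2 : ℝ) : ℂ) = ((n + 1 : ℕ) : ℂ) ^ ((-(2 * ε) : ℝ) : ℂ) := by
      rw [← Real.rpow_mul_natCast (by positivity), Complex.ofReal_cpow (by positivity)]
      push_cast
      congr 1
      ring
    rw [hsq, mul_left_comm, ← Complex.cpow_add _ _ hn]
    congr 2
    push_cast
    ring
  simp only [hterm] at hL
  exact ⟨L, hL, le_of_tendsto (tendsto_logarithmic_riesz_mean hL).norm
    (.of_forall (norm_logarithmic_riesz_mean_le hB hproj hs))⟩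
end

section
/- (Schnee's theorem) Let a : ℕ≥1 → ℂ and suppose the partial sums ∑_{n=1}^{M} a_n n^{-s_0} converge as M → ∞ for some complex number s_0. Let F be a function analytic on the right half-plane Ω_0 = {s : Re(s) > 0} such that F(s) equals the limit of the partial sums ∑_{n=1}^{M} a_n n^{-s} for every s with Re(s) > Re(s_0), and suppose that for every δ > 0 and every ε > 0 there is a constant C > 0 with |F(s)| ≤ C·(1 + |s|)^ε for all s with Re(s) ≥ δ. Then for every s with Re(s) > 0, the partial sums ∑_{n=1}^{M} a_n n^{-s} converge as M → ∞ to F(s). -/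
open Filter

section Schnee

open MeasureTheory Complex

theorem Continuous.integrable_of_norm_le_abs_rpow {E : Type*} [NormedAddCommGroup E]
    {f : ℝ → E} {p K : ℝ} (hp : 1 < p)
    (hf : Continuous f) (hK : ∀ t : ℝ, 1 ≤ |t| → ‖f t‖ ≤ K * |t| ^ (-p)) : Integrable f := by
  have hbase : Integrable (fun t : ℝ => (1 + ‖t‖) ^ (-p)) :=
    integrable_one_add_norm (by simpa using hp)
  refine hf.locallyIntegrable.integrable_of_isBigO_cocompact (g := fun t : ℝ => (1 + ‖t‖) ^ (-p))
    (Asymptotics.IsBigO.of_bound (|K| * 2 ^ p) ?_) (hbase.integrableAtFilter _)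
  have hev : ∀ᶠ t : ℝ in cocompact ℝ, 1 ≤ ‖t‖ :=
    (tendsto_norm_cocompact_atTop (E := ℝ)).eventually_ge_atTop 1
  filter_upwards [hev] with t ht
  have ht0 : 0 < |t| := lt_of_lt_of_le one_pos ht
  have hcmp : (2 * |t|) ^ (-p) ≤ (1 + |t|) ^ (-p) :=
    Real.rpow_le_rpow_of_nonpos (by positivity) (by linarith [show 1 ≤ |t| from ht]) (by linarith)
  rw [Real.norm_of_nonneg (by positivity), Real.norm_eq_abs]
  calc ‖f t‖ ≤ K * |t| ^ (-p) := hK t ht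
    _ ≤ |K| * |t| ^ (-p) := by gcongr; exact le_abs_self K
    _ = |K| * 2 ^ p * (2 * |t|) ^ (-p) := by
      rw [Real.mul_rpow (by norm_num) ht0.le, Real.rpow_neg (x := 2) (by norm_num)]
      field_simp
    _ ≤ |K| * 2 ^ p * (1 + |t|) ^ (-p) := by gcongr

theorem abs_im_le_norm_add_mul_I (σ t : ℝ) : |t| ≤ ‖(σ + t * I : ℂ)‖ := by
  simpa using Complex.abs_im_le_norm (σ + t * I : ℂ)

theorem abs_re_le_norm_add_mul_I (σ t : ℝ) : |σ| ≤ ‖(σ + t * I : ℂ)‖ := by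
  simpa using Complex.abs_re_le_norm (σ + t * I : ℂ)

/-- A function that is continuous on a vertical line and decays like `‖s‖ ^ (-p)`, `p > 1`, is
integrable there. -/
theorem integrable_vertical_of_norm_le {E : Type*} [NormedAddCommGroup E] {H : ℂ → E}
    {σ p K : ℝ} (hp : 1 < p)
    (hH : Continuous fun t : ℝ => H (σ + t * I))
    (hK : ∀ s : ℂ, s.re = σ → 1 ≤ ‖s‖ → ‖H s‖ ≤ K * ‖s‖ ^ (-p)) :
    Integrable fun t : ℝ => H (σ + t * I) := by
  refine hH.integrable_of_norm_le_abs_rpow (K := |K|) hp fun t ht => ?_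
  have hle := abs_im_le_norm_add_mul_I σ t
  calc _ ≤ K * ‖(σ + t * I : ℂ)‖ ^ (-p) := hK _ (by simp) (ht.trans hle)
    _ ≤ |K| * ‖(σ + t * I : ℂ)‖ ^ (-p) := by gcongr; exact le_abs_self K
    _ ≤ _ := mul_le_mul_of_nonneg_left
      (Real.rpow_le_rpow_of_nonpos (by linarith) hle (by linarith)) (abs_nonneg K)

theorem continuous_vertical {H : ℂ → ℂ} {σ σ' : ℝ} (h : σ' < σ)
    (hH : DifferentiableOn ℂ H {s : ℂ | σ' < s.re}) : Continuous fun t : ℝ => H (σ + t * I) :=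
  hH.continuousOn.comp_continuous (by fun_prop) (by simpa using h)

/-- The integral along a vertical line of a function holomorphic to the right of it and decaying
like `‖s‖ ^ (-p)`, `p > 1`, vanishes. -/
theorem integral_vertical_eq_zero {H : ℂ → ℂ} {σ σ' p K : ℝ} (hσ : σ' < σ) (hp : 1 < p)
    (hH : DifferentiableOn ℂ H {s : ℂ | σ' < s.re})
    (hK : ∀ s : ℂ, σ ≤ s.re → 1 ≤ ‖s‖ → ‖H s‖ ≤ K * ‖s‖ ^ (-p)) :
    ∫ t : ℝ, H (σ + t * I) = 0 := by
  have hint : Integrable fun t : ℝ => H (σ + t * I) :=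
    integrable_vertical_of_norm_le hp (continuous_vertical hσ hH)
      fun s hs => hK s hs.ge
  have hlim := intervalIntegral_tendsto_integral hint tendsto_neg_atTop_atBot tendsto_id
  refine tendsto_nhds_unique hlim ?_
  have hbound : ∀ᶠ R : ℝ in atTop,
      ‖∫ t in (-R)..R, H (σ + t * I)‖ ≤ (|K| * (4 + 4 * |σ|)) * R ^ (-(p - 1)) := by
    filter_upwards [eventually_ge_atTop 1] with R hR
    have hR0 : 0 < R := by linarith
    have hpt : ∀ s : ℂ, σ ≤ s.re → R ≤ ‖s‖ → ‖H s‖ ≤ |K| * R ^ (-p) := fun s h1 h2 =>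
      calc _ ≤ K * ‖s‖ ^ (-p) := hK _ h1 (hR.trans h2)
        _ ≤ |K| * ‖s‖ ^ (-p) := by gcongr; exact le_abs_self K
        _ ≤ _ := mul_le_mul_of_nonneg_left
          (Real.rpow_le_rpow_of_nonpos hR0 h2 (by linarith)) (abs_nonneg K)
    have hσR : σ ≤ |σ| + R := by linarith [le_abs_self σ]
    have hrect := Complex.integral_boundary_rect_eq_zero_of_differentiableOn H
      (σ - R * I : ℂ) (((|σ| + R : ℝ) : ℂ) + R * I) (hH.mono fun s hs => by
        have h1 := (Complex.mem_reProdIm.1 hs).1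
        simp only [sub_re, ofReal_re, mul_re, I_re, mul_zero, ofReal_im, I_im, mul_one, sub_self,
          sub_zero, add_re, add_zero] at h1
        rw [Set.uIcc_of_le hσR] at h1
        exact hσ.trans_le h1.1)
    simp only [sub_re, ofReal_re, mul_re, I_re, mul_zero, ofReal_im, I_im, mul_one, sub_self,
      sub_zero, add_re, add_zero, sub_im, mul_im, zero_sub, add_im, zero_add, smul_eq_mul]
      at hrect
    have hhor : ∀ y : ℝ, |y| = R →
        ‖∫ x in σ..(|σ| + R), H (x + y * I)‖ ≤ |K| * R ^ (-p) * (2 * |σ| + R) := by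
      intro y hy
      refine (intervalIntegral.norm_integral_le_of_norm_le_const fun x hx => ?_).trans
        (b := |K| * R ^ (-p) * |(|σ| + R) - σ|) ?_
      · rw [Set.uIoc_of_le hσR] at hx
        exact hpt _ (by simpa using hx.1.le) (hy ▸ abs_im_le_norm_add_mul_I x y)
      · gcongr
        rw [abs_of_nonneg (by linarith)]
        linarith [neg_abs_le σ]
    have hbot := hhor (-R) (by rw [abs_neg, abs_of_pos hR0])
    have htop := hhor R (abs_of_pos hR0)
    have hright : ‖∫ t in (-R)..R, H (((|σ| + R : ℝ) : ℂ) + t * I)‖ ≤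
        |K| * R ^ (-p) * (2 * R) := by
      refine (intervalIntegral.norm_integral_le_of_norm_le_const fun x hx => ?_).trans
        (b := |K| * R ^ (-p) * |R - -R|) ?_
      · refine hpt _ (by simpa using hσR) (le_trans ?_ (abs_re_le_norm_add_mul_I _ x))
        rw [abs_of_nonneg (by positivity)]
        linarith [abs_nonneg σ]
      · rw [abs_of_nonneg (show 0 ≤ R - -R by linarith)]
        apply le_of_eq; ring
    have heq : I * ∫ t in (-R)..R, H (σ + t * I) =
        (∫ x in σ..(|σ| + R), H (x + (-R : ℝ) * I)) - (∫ x in σ..(|σ| + R), H (x + R * I)) +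
        I * ∫ t in (-R)..R, H (((|σ| + R : ℝ) : ℂ) + t * I) := by
      linear_combination -hrect
    have hnorm : ‖∫ t in (-R)..R, H (σ + t * I)‖ = ‖I * ∫ t in (-R)..R, H (σ + t * I)‖ := by
      simp
    rw [hnorm, heq]
    have hpow : R ^ (-(p - 1)) = R ^ (-p) * R := by
      rw [← Real.rpow_add_one hR0.ne']; congr 1; ring
    calc _ ≤ |K| * R ^ (-p) * (2 * |σ| + R) + |K| * R ^ (-p) * (2 * |σ| + R)
          + |K| * R ^ (-p) * (2 * R) := by
          refine (norm_add_le _ _).trans (add_le_add ((norm_sub_le _ _).trans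
            (add_le_add hbot htop)) ?_)
          simpa using hright
      _ = |K| * R ^ (-p) * (4 * |σ| * 1 + 4 * R) := by ring
      _ ≤ |K| * R ^ (-p) * (4 * |σ| * R + 4 * R) := by gcongr
      _ = _ := by rw [hpow]; ring
  refine squeeze_zero_norm' hbound ?_
  simpa using (tendsto_rpow_neg_atTop (show 0 < p - 1 by linarith)).const_mul _

theorem integral_exp_sub_exp_div_sq_eq_zero {η x y : ℝ} (hη : 0 < η) (hx : 0 ≤ x) (hy : 0 ≤ y) :
    Integrable (fun t : ℝ => (cexp (y * ((-η : ℝ) + t * I)) - cexp (x * ((-η : ℝ) + t * I))) /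
        ((-η : ℝ) + t * I) ^ 2) ∧
      ∫ t : ℝ, (cexp (y * ((-η : ℝ) + t * I)) - cexp (x * ((-η : ℝ) + t * I))) /
        ((-η : ℝ) + t * I) ^ 2 = 0 := by
  let H : ℂ → ℂ := fun s => (cexp (y * -s) - cexp (x * -s)) / s ^ 2
  have hH : DifferentiableOn ℂ H {s : ℂ | 0 < s.re} := by
    intro s hs
    have hs0 : s ≠ 0 := by rintro rfl; simp at hs
    exact DifferentiableAt.differentiableWithinAt (by fun_prop (disch := simpa using hs0))
  have hexp : ∀ (u : ℝ) (s : ℂ), 0 ≤ u → η ≤ s.re → ‖cexp (u * -s)‖ ≤ 1 := by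
    intro u s hu hs
    rw [Complex.norm_exp, Real.exp_le_one_iff]
    simp only [mul_re, ofReal_re, neg_re, ofReal_im, zero_mul, sub_zero]
    nlinarith
  have hK : ∀ s : ℂ, η ≤ s.re → 1 ≤ ‖s‖ → ‖H s‖ ≤ 2 * ‖s‖ ^ (-2 : ℝ) := by
    intro s hs hs1
    rw [Real.rpow_neg (by positivity), Real.rpow_two, ← div_eq_mul_inv, norm_div, norm_pow]
    gcongr
    linarith [norm_sub_le (cexp (y * -s)) (cexp (x * -s)), hexp x s hx hs, hexp y s hy hs]
  have hint := integrable_vertical_of_norm_le one_lt_two (continuous_vertical hη hH)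
      fun s hs => hK s hs.ge
  have hzero := integral_vertical_eq_zero hη one_lt_two hH hK
  have hneg : (fun t : ℝ => (cexp (y * ((-η : ℝ) + t * I)) - cexp (x * ((-η : ℝ) + t * I))) /
      ((-η : ℝ) + t * I) ^ 2) = fun t : ℝ => (fun u : ℝ => H (η + u * I)) (-t) := by
    funext t
    simp only [H]
    have : ((-η : ℝ) + t * I : ℂ) = -(η + (-t : ℝ) * I) := by push_cast; ring
    rw [this, neg_sq]
  rw [hneg]
  exact ⟨hint.comp_neg, by rw [integral_neg_eq_self (fun u : ℝ => H (η + u * I)), hzero]⟩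

theorem integral_two_mul_div_mul_add {η : ℝ} (hη : 0 < η) :
    Integrable (fun t : ℝ => (2 * η / (((-η : ℝ) + t * I) * (((-η : ℝ) + t * I) + 2 * η)) : ℂ)) ∧
    ∫ t : ℝ, (2 * η / (((-η : ℝ) + t * I) * (((-η : ℝ) + t * I) + 2 * η)) : ℂ) =
      -(2 * Real.pi) := by
  have heq : (fun t : ℝ => (2 * η / (((-η : ℝ) + t * I) * (((-η : ℝ) + t * I) + 2 * η)) : ℂ)) =
      fun t : ℝ => ((-(2 / η) * (1 + (t / η) ^ 2)⁻¹ : ℝ) : ℂ) := by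
    funext t
    have h1 : (((-η : ℝ) + t * I) * (((-η : ℝ) + t * I) + 2 * η) : ℂ) =
        ((-(η ^ 2 * (1 + (t / η) ^ 2)) : ℝ) : ℂ) := by
      have : (-(η ^ 2 * (1 + (t / η) ^ 2)) : ℝ) = -(η ^ 2 + t ^ 2) := by field_simp
      rw [this]
      push_cast
      linear_combination (t : ℂ) ^ 2 * I_sq
    rw [h1]
    have h2 : (1 + (t / η) ^ 2) ≠ 0 := by positivity
    norm_cast
    field_simp
  rw [heq]
  constructor
  · exact ((integrable_inv_one_add_sq.comp_div hη.ne').const_mul _).ofReal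
  · rw [integral_complex_ofReal, integral_const_mul,
      Measure.integral_comp_div (fun t : ℝ => (1 + t ^ 2)⁻¹), integral_univ_inv_one_add_sq,
      abs_of_pos hη]
    rw [smul_eq_mul, show -(2 / η) * (η * Real.pi) = -(2 * Real.pi) by field_simp]
    push_cast
    ring

/-- A Perron-type formula: integrating `g` against `(e^{ys} - e^{xs}) / s²` along a vertical line to
the left of the origin picks up the value `g 0`, if `g` decays fast enough on the right. -/
theorem integral_mul_exp_sub_exp_div_sq {g : ℂ → ℂ} {η x y K : ℝ} (hη : 0 < η) (hxy : x ≤ y)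
    (hg : DifferentiableOn ℂ g {s : ℂ | -(2 * η) < s.re})
    (hK : ∀ s : ℂ, -η ≤ s.re → 1 ≤ ‖s‖ →
      ‖g s‖ * Real.exp (y * s.re) ≤ K * ‖s‖ ^ (1 / 2 : ℝ)) :
    Integrable (fun t : ℝ => g ((-η : ℝ) + t * I) *
      ((cexp (y * ((-η : ℝ) + t * I)) - cexp (x * ((-η : ℝ) + t * I))) /
        ((-η : ℝ) + t * I) ^ 2)) ∧
    ∫ t : ℝ, g ((-η : ℝ) + t * I) *
      ((cexp (y * ((-η : ℝ) + t * I)) - cexp (x * ((-η : ℝ) + t * I))) /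
        ((-η : ℝ) + t * I) ^ 2) = -(2 * Real.pi) * ((y - x) * g 0) := by
  let D : ℂ → ℂ := fun s => cexp (y * s) - cexp (x * s)
  let r : ℂ → ℂ := fun s => g s * dslope D 0 s - (y - x) * g 0 * (2 * η / (s + 2 * η))
  let U : Set ℂ := {s : ℂ | -(2 * η) < s.re}
  have hU : U ∈ nhds (0 : ℂ) :=
    (isOpen_lt continuous_const Complex.continuous_re).mem_nhds (by simpa using hη)
  have hD0 : D 0 = 0 := by simp [D]
  have hE0 : dslope D 0 0 = y - x := by
    rw [dslope_same]
    have h : ∀ u : ℂ, HasDerivAt (fun s : ℂ => cexp (u * s)) u 0 := fun u => by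
      simpa using ((hasDerivAt_id (0 : ℂ)).const_mul u).cexp
    exact ((h y).sub (h x)).deriv
  have hE : DifferentiableOn ℂ (dslope D 0) U :=
    (Complex.differentiableOn_dslope hU).2 (by fun_prop)
  have hne : ∀ s ∈ U, s + 2 * η ≠ 0 := by
    intro s hs h
    have h' := congrArg re h
    simp at h'
    have hs' : -(2 * η) < s.re := hs
    linarith
  have hr : DifferentiableOn ℂ r U :=
    (hg.mul hE).sub ((differentiableOn_const _).mul
      ((differentiableOn_const _).div (by fun_prop) hne))
  have hr0 : r 0 = 0 := by
    have h2 : (2 * η : ℂ) ≠ 0 := by simpa using hη.ne'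
    simp only [r, hE0, zero_add, div_self h2]
    ring
  have hH : DifferentiableOn ℂ (dslope r 0) U := (Complex.differentiableOn_dslope hU).2 hr
  have hHeq : ∀ s : ℂ, s ≠ 0 → dslope r 0 s =
      g s * (D s / s ^ 2) - (y - x) * g 0 * (2 * η / (s * (s + 2 * η))) := by
    intro s hs
    rw [dslope_of_ne _ hs, slope_def_field, hr0]
    simp only [r]
    rw [dslope_of_ne _ hs, slope_def_field, hD0, sub_zero, sub_zero, sub_zero, sub_div,
      mul_div_assoc, div_div, ← sq, mul_div_assoc, div_div, mul_comm s (s + 2 * η)]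
  have hbound : ∀ s : ℂ, -η ≤ s.re → 1 ≤ ‖s‖ → ‖dslope r 0 s‖ ≤
      ((1 + Real.exp ((y - x) * η)) * K + ‖(y - x) * g 0‖ * (2 * η)) *
        ‖s‖ ^ (-(3 / 2) : ℝ) := by
    intro s hs hs1
    have hs0 : s ≠ 0 := by rintro rfl; simp at hs1; linarith
    have hspos : 0 < ‖s‖ := by linarith
    rw [hHeq s hs0, add_mul]
    refine (norm_sub_le _ _).trans (add_le_add ?_ ?_)
    · have hDn : ‖D s‖ ≤ (1 + Real.exp ((y - x) * η)) * Real.exp (y * s.re) := by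
        refine (norm_sub_le _ _).trans ?_
        simp only [Complex.norm_exp, re_ofReal_mul]
        rw [add_mul, one_mul, ← Real.exp_add]
        gcongr
        nlinarith
      have hpow : ‖s‖ ^ (-(3 / 2) : ℝ) = ‖s‖ ^ (1 / 2 : ℝ) / ‖s‖ ^ 2 := by
        rw [← Real.rpow_two, ← Real.rpow_sub hspos]; norm_num
      rw [norm_mul, norm_div, norm_pow, hpow, ← mul_div_assoc, ← mul_div_assoc]
      refine div_le_div_of_nonneg_right ?_ (by positivity)
      calc ‖g s‖ * ‖D s‖ ≤ ‖g s‖ * ((1 + Real.exp ((y - x) * η)) * Real.exp (y * s.re)) := by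
            gcongr
        _ = (1 + Real.exp ((y - x) * η)) * (‖g s‖ * Real.exp (y * s.re)) := by ring
        _ ≤ (1 + Real.exp ((y - x) * η)) * (K * ‖s‖ ^ (1 / 2 : ℝ)) :=
            mul_le_mul_of_nonneg_left (hK s hs hs1) (by positivity)
        _ = _ := by ring
    · have hle : ‖s‖ ≤ ‖s + 2 * η‖ := by
        rw [← sq_le_sq₀ (norm_nonneg _) (norm_nonneg _), ← Complex.normSq_eq_norm_sq,
          ← Complex.normSq_eq_norm_sq, Complex.normSq_apply, Complex.normSq_apply]
        simp
        nlinarith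
      have hpow : (‖s‖ ^ 2)⁻¹ ≤ ‖s‖ ^ (-(3 / 2) : ℝ) := by
        rw [← Real.rpow_two, ← Real.rpow_neg hspos.le]
        exact Real.rpow_le_rpow_of_exponent_le hs1 (by norm_num)
      rw [norm_mul, mul_assoc]
      gcongr
      rw [norm_div, norm_mul s]
      have h2 : ‖(2 * η : ℂ)‖ = 2 * η := by simp [abs_of_pos hη]
      rw [h2, div_eq_mul_inv]
      gcongr
      refine le_trans ?_ hpow
      rw [sq]
      gcongr
  have hlt : -(2 * η) < -η := by linarith
  have hp : (1 : ℝ) < 3 / 2 := by norm_num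
  have hint := integrable_vertical_of_norm_le hp (continuous_vertical hlt hH)
      fun s hs => hbound s hs.ge
  have hzero := integral_vertical_eq_zero hlt hp hH hbound
  obtain ⟨hBint, hB⟩ := integral_two_mul_div_mul_add hη
  have hline : (fun t : ℝ => g ((-η : ℝ) + t * I) *
      ((cexp (y * ((-η : ℝ) + t * I)) - cexp (x * ((-η : ℝ) + t * I))) /
        ((-η : ℝ) + t * I) ^ 2)) = fun t : ℝ => dslope r 0 ((-η : ℝ) + t * I) +
      (y - x) * g 0 *
        (2 * η / (((-η : ℝ) + t * I) * (((-η : ℝ) + t * I) + 2 * η)) : ℂ) := by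
    funext t
    have hne0 : ((-η : ℝ) + t * I : ℂ) ≠ 0 := by
      intro h
      have h' := congrArg re h
      simp at h'
      linarith
    rw [hHeq _ hne0]
    ring
  rw [hline]
  refine ⟨hint.add (hBint.const_mul _), ?_⟩
  rw [integral_add hint (hBint.const_mul _), hzero, integral_const_mul, hB]
  ring

theorem norm_exp_sub_exp_le {x y η θ : ℝ} {s : ℂ} (hxy : x ≤ y) (hη : 0 ≤ η) (hs : s.re = -η)
    (hθ0 : 0 ≤ θ) (hθ1 : θ ≤ 1) :
    ‖cexp (y * s) - cexp (x * s)‖ ≤ 2 * Real.exp (-(x * η)) * ((y - x) * ‖s‖) ^ θ := by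
  have hnorm : ∀ u ≥ x, ‖cexp (u * s)‖ ≤ Real.exp (-(x * η)) := by
    intro u hu
    rw [Complex.norm_exp, re_ofReal_mul, hs, Real.exp_le_exp]
    nlinarith
  have hu0 : 0 ≤ (y - x) * ‖s‖ := mul_nonneg (by linarith) (norm_nonneg s)
  rcases le_total 1 ((y - x) * ‖s‖) with h | h
  · calc _ ≤ 2 * Real.exp (-(x * η)) := by
          linarith [norm_sub_le (cexp (y * s)) (cexp (x * s)), hnorm x le_rfl, hnorm y hxy]
      _ ≤ _ := le_mul_of_one_le_right (by positivity) (Real.one_le_rpow h hθ0)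
  · have hmv := norm_image_sub_le_of_norm_deriv_le_segment' (f := fun u : ℝ => cexp (u * s))
      (f' := fun u : ℝ => cexp (u * s) * s) (a := x) (b := y)
      (C := Real.exp (-(x * η)) * ‖s‖)
      (fun u _ => by
        have h1 : HasDerivAt (fun u : ℝ => (u : ℂ) * s) s u := by
          simpa using (Complex.ofRealCLM.hasDerivAt (x := u)).mul_const s
        exact h1.cexp.hasDerivWithinAt)
      (fun u hu => by rw [norm_mul]; gcongr; exact hnorm u hu.1) y ⟨hxy, le_rfl⟩
    have hself : (y - x) * ‖s‖ ≤ ((y - x) * ‖s‖) ^ θ := by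
      rcases hu0.eq_or_lt with h0 | h0
      · rw [← h0]; positivity
      · simpa using Real.rpow_le_rpow_of_exponent_ge h0 h hθ1
    calc _ ≤ Real.exp (-(x * η)) * ((y - x) * ‖s‖) := hmv.trans_eq (by ring)
      _ ≤ 2 * Real.exp (-(x * η)) * ((y - x) * ‖s‖) ^ θ := by
        gcongr
        linarith [Real.exp_pos (-(x * η))]

/-- The `M`-th partial sum of the Dirichlet series `∑ b n * (n + 1) ^ (-s)`. -/
noncomputable def dirichletPartialSum (b : ℕ → ℂ) (M : ℕ) (s : ℂ) : ℂ :=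
  ∑ n ∈ Finset.range M, b n * cexp (-(Real.log (n + 1) : ℝ) * s)

theorem differentiable_dirichletPartialSum (b : ℕ → ℂ) (M : ℕ) :
    Differentiable ℂ (dirichletPartialSum b M) := by
  unfold dirichletPartialSum
  fun_prop

theorem log_natCast_add_one_nonneg (n : ℕ) : 0 ≤ Real.log (n + 1) :=
  Real.log_nonneg (by linarith [n.cast_nonneg (α := ℝ)])

theorem norm_exp_neg_ofReal_mul (u : ℝ) (s : ℂ) : ‖cexp (-(u : ℂ) * s)‖ = Real.exp (-u * s.re) := by
  rw [Complex.norm_exp, ← ofReal_neg, re_ofReal_mul]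

theorem norm_dirichletPartialSum_le (b : ℕ → ℂ) (M : ℕ) {s : ℂ} (hs : 0 ≤ s.re) :
    ‖dirichletPartialSum b M s‖ ≤ ∑ n ∈ Finset.range M, ‖b n‖ := by
  refine (norm_sum_le _ _).trans (Finset.sum_le_sum fun n _ => ?_)
  rw [norm_mul, norm_exp_neg_ofReal_mul]
  refine mul_le_of_le_one_right (norm_nonneg _) (Real.exp_le_one_iff.2 ?_)
  nlinarith [log_natCast_add_one_nonneg n]

/-- Far to the right, the tail after `M` terms is `O((M + 1) ^ (-Re s))`. -/
theorem exists_norm_sub_dirichletPartialSum_le {b : ℕ → ℂ} {s₀ L₀ : ℂ} {F : ℂ → ℂ}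
    (hconv : Tendsto (fun N => dirichletPartialSum b N s₀) atTop (nhds L₀))
    (hF : ∀ s : ℂ, s₀.re < s.re →
      Tendsto (fun N => dirichletPartialSum b N s) atTop (nhds (F s))) (M : ℕ) :
    ∃ K : ℝ, 0 ≤ K ∧ ∀ s : ℂ, |s₀.re| + 2 ≤ s.re →
      ‖F s - dirichletPartialSum b M s‖ * Real.exp (Real.log (M + 1) * s.re) ≤ K := by
  obtain ⟨B, hB0, hB⟩ : ∃ B : ℝ, 0 ≤ B ∧
      ∀ n, ‖b n * cexp (-(Real.log (n + 1) : ℝ) * s₀)‖ ≤ B := by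
    obtain ⟨B, hB⟩ := (Metric.isBounded_range_of_tendsto _ hconv).exists_norm_le
    have hB0 : 0 ≤ B := (norm_nonneg _).trans (hB _ ⟨0, rfl⟩)
    refine ⟨B + B, by linarith, fun n => ?_⟩
    have h : b n * cexp (-(Real.log (n + 1) : ℝ) * s₀) =
        dirichletPartialSum b (n + 1) s₀ - dirichletPartialSum b n s₀ := by
      simp [dirichletPartialSum, Finset.sum_range_succ]
    rw [h]
    exact (norm_sub_le _ _).trans (add_le_add (hB _ ⟨_, rfl⟩) (hB _ ⟨_, rfl⟩))
  set c : ℝ := |s₀.re| + 2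
  have hsum : Summable fun n : ℕ => B * ((n + 1 : ℝ) ^ 2)⁻¹ := by
    have h := (summable_nat_add_iff 1).2 (Real.summable_nat_pow_inv.2 one_lt_two)
    exact Summable.mul_left B (by simpa using h)
  have hterm : ∀ n : ℕ, ‖b n‖ * Real.exp (-Real.log (n + 1) * c) ≤ B * ((n + 1 : ℝ) ^ 2)⁻¹ := by
    intro n
    have hl := log_natCast_add_one_nonneg n
    have hpos : (0 : ℝ) < n + 1 := by positivity
    have hexp2 : Real.exp (-Real.log (n + 1) * 2) = ((n + 1 : ℝ) ^ 2)⁻¹ := by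
      rw [neg_mul, Real.exp_neg, mul_comm, two_mul, Real.exp_add, Real.exp_log hpos, sq]
    have h := hB n
    rw [norm_mul, norm_exp_neg_ofReal_mul] at h
    calc ‖b n‖ * Real.exp (-Real.log (n + 1) * c)
        ≤ ‖b n‖ * Real.exp (-Real.log (n + 1) * s₀.re + -Real.log (n + 1) * 2) := by
          gcongr
          nlinarith [le_abs_self s₀.re]
      _ = ‖b n‖ * Real.exp (-Real.log (n + 1) * s₀.re) * ((n + 1 : ℝ) ^ 2)⁻¹ := by
          rw [Real.exp_add, hexp2]; ring
      _ ≤ _ := by gcongr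
  refine ⟨Real.exp (Real.log (M + 1) * c) * ∑' n : ℕ, B * ((n + 1 : ℝ) ^ 2)⁻¹,
    mul_nonneg (Real.exp_pos _).le (tsum_nonneg fun n => by positivity), fun s hs => ?_⟩
  have hlim := (((hF s (by linarith [le_abs_self s₀.re])).sub_const
    (dirichletPartialSum b M s)).norm).mul_const (Real.exp (Real.log (M + 1) * s.re))
  refine le_of_tendsto hlim ?_
  filter_upwards [eventually_ge_atTop M] with N hN
  have hIco : dirichletPartialSum b N s - dirichletPartialSum b M s =
      ∑ n ∈ Finset.Ico M N, b n * cexp (-(Real.log (n + 1) : ℝ) * s) := by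
    rw [Finset.sum_Ico_eq_sub _ hN]; rfl
  rw [hIco]
  calc _ ≤ (∑ n ∈ Finset.Ico M N, ‖b n‖ * Real.exp (-Real.log (n + 1) * s.re)) *
        Real.exp (Real.log (M + 1) * s.re) := by
        gcongr
        refine (norm_sum_le _ _).trans (Finset.sum_le_sum fun n _ => ?_)
        rw [norm_mul, norm_exp_neg_ofReal_mul]
    _ = ∑ n ∈ Finset.Ico M N, ‖b n‖ *
        Real.exp (-(Real.log (n + 1) - Real.log (M + 1)) * s.re) := by
        rw [Finset.sum_mul]
        refine Finset.sum_congr rfl fun n _ => ?_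
        rw [mul_assoc, ← Real.exp_add]
        congr 2
        ring
    _ ≤ ∑ n ∈ Finset.Ico M N, Real.exp (Real.log (M + 1) * c) * (B * ((n + 1 : ℝ) ^ 2)⁻¹) := by
        refine Finset.sum_le_sum fun n hn => ?_
        have hle : Real.log (M + 1) ≤ Real.log (n + 1) := by
          have : (M : ℝ) ≤ n := by exact_mod_cast (Finset.mem_Ico.1 hn).1
          exact Real.log_le_log (by positivity) (by linarith)
        calc _ ≤ ‖b n‖ * Real.exp (-(Real.log (n + 1) - Real.log (M + 1)) * c) := by
              gcongr ‖b n‖ * Real.exp ?_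
              nlinarith
          _ = Real.exp (Real.log (M + 1) * c) * (‖b n‖ * Real.exp (-Real.log (n + 1) * c)) := by
              rw [mul_left_comm, ← Real.exp_add]
              congr 2
              ring
          _ ≤ _ := mul_le_mul_of_nonneg_left (hterm n) (Real.exp_pos _).le
    _ = Real.exp (Real.log (M + 1) * c) * ∑ n ∈ Finset.Ico M N, B * ((n + 1 : ℝ) ^ 2)⁻¹ := by
        rw [Finset.mul_sum]
    _ ≤ _ := by
        gcongr
        exact hsum.sum_le_tsum _ fun n _ => by positivity

/-- The Perron-type formula for the remainder of a Dirichlet series. -/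
theorem integral_dirichlet_kernel {b : ℕ → ℂ} {s₀ L₀ w : ℂ} {F : ℂ → ℂ} {η : ℝ}
    (hconv : Tendsto (fun N => dirichletPartialSum b N s₀) atTop (nhds L₀))
    (hF : ∀ s : ℂ, s₀.re < s.re →
      Tendsto (fun N => dirichletPartialSum b N s) atTop (nhds (F s)))
    (hdiff : DifferentiableOn ℂ F {s : ℂ | 0 < s.re}) {C : ℝ} (hC0 : 0 ≤ C)
    (hC : ∀ s : ℂ, η ≤ s.re → ‖F s‖ ≤ C * (1 + ‖s‖) ^ (1 / 2 : ℝ))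
    (hη : 0 < η) (hw : 2 * η ≤ w.re) {M : ℕ} (hM : 1 ≤ M) :
    ∫ t : ℝ, F (w + ((-η : ℝ) + t * I)) *
      ((cexp ((Real.log (M + 1) : ℝ) * ((-η : ℝ) + t * I)) -
        cexp ((Real.log M : ℝ) * ((-η : ℝ) + t * I))) / ((-η : ℝ) + t * I) ^ 2) =
      -(2 * Real.pi) * (((Real.log (M + 1) : ℝ) - (Real.log M : ℝ)) *
        (F w - dirichletPartialSum b M w)) := by
  have hM0 : (0 : ℝ) < M := by exact_mod_cast hM
  set x : ℝ := Real.log M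
  set y : ℝ := Real.log (M + 1)
  have hxy : x ≤ y := Real.log_le_log hM0 (by linarith)
  have hy0 : 0 ≤ y := log_natCast_add_one_nonneg M
  let g : ℂ → ℂ := fun s => F (w + s) - dirichletPartialSum b M (w + s)
  have hg : DifferentiableOn ℂ g {s : ℂ | -(2 * η) < s.re} := by
    refine DifferentiableOn.sub (hdiff.comp (by fun_prop) fun s hs => ?_)
      (((differentiable_dirichletPartialSum b M).comp (by fun_prop)).differentiableOn)
    have hs' : -(2 * η) < s.re := hs
    show 0 < (w + s).re
    rw [add_re]
    linarith
  obtain ⟨K, hK0, hK⟩ := exists_norm_sub_dirichletPartialSum_le hconv hF M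
  set c : ℝ := |s₀.re| + 2
  set Q : ℝ := ∑ n ∈ Finset.range M, ‖b n‖
  have hQ0 : 0 ≤ Q := Finset.sum_nonneg fun n _ => norm_nonneg _
  have hbound : ∀ s : ℂ, -η ≤ s.re → 1 ≤ ‖s‖ → ‖g s‖ * Real.exp (y * s.re) ≤
      (K + (C * (2 + ‖w‖) ^ (1 / 2 : ℝ) + Q) * Real.exp (y * c)) * ‖s‖ ^ (1 / 2 : ℝ) := by
    intro s hs hs1
    have hone : 1 ≤ ‖s‖ ^ (1 / 2 : ℝ) := Real.one_le_rpow hs1 (by norm_num)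
    have hrest : 0 ≤ (C * (2 + ‖w‖) ^ (1 / 2 : ℝ) + Q) * Real.exp (y * c) := by positivity
    rcases le_total c (w + s).re with h | h
    · calc _ ≤ ‖g s‖ * Real.exp (y * (w + s).re) := by
            gcongr ‖g s‖ * Real.exp (y * ?_)
            rw [add_re]; linarith
        _ ≤ K := hK _ h
        _ ≤ K + (C * (2 + ‖w‖) ^ (1 / 2 : ℝ) + Q) * Real.exp (y * c) := by linarith
        _ ≤ _ := le_mul_of_one_le_right (by linarith) hone
    · rw [add_re] at h
      have hFs : ‖F (w + s)‖ ≤ C * (2 + ‖w‖) ^ (1 / 2 : ℝ) * ‖s‖ ^ (1 / 2 : ℝ) := by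
        refine (hC _ (by rw [add_re]; linarith)).trans ?_
        rw [mul_assoc, ← Real.mul_rpow (by positivity) (by positivity)]
        gcongr
        nlinarith [norm_add_le w s, norm_nonneg w]
      have hPs : ‖dirichletPartialSum b M (w + s)‖ ≤ Q * ‖s‖ ^ (1 / 2 : ℝ) :=
        (norm_dirichletPartialSum_le b M (by rw [add_re]; linarith)).trans
          (le_mul_of_one_le_right hQ0 hone)
      have hgs : ‖g s‖ ≤ (C * (2 + ‖w‖) ^ (1 / 2 : ℝ) + Q) * ‖s‖ ^ (1 / 2 : ℝ) := by
        rw [add_mul]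
        exact (norm_sub_le _ _).trans (add_le_add hFs hPs)
      calc _ ≤ (C * (2 + ‖w‖) ^ (1 / 2 : ℝ) + Q) * ‖s‖ ^ (1 / 2 : ℝ) * Real.exp (y * c) := by
            gcongr
            linarith
        _ ≤ (C * (2 + ‖w‖) ^ (1 / 2 : ℝ) + Q) * ‖s‖ ^ (1 / 2 : ℝ) * Real.exp (y * c) +
            K * ‖s‖ ^ (1 / 2 : ℝ) := le_add_of_nonneg_right (by positivity)
        _ = _ := by ring
  obtain ⟨hgint, hgval⟩ := integral_mul_exp_sub_exp_div_sq hη hxy hg hbound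
  have hpoly : ∀ n ∈ Finset.range M,
      Integrable (fun t : ℝ => b n * cexp (-(Real.log (n + 1) : ℝ) * w) *
        ((cexp (((y - Real.log (n + 1) : ℝ) : ℂ) * ((-η : ℝ) + t * I)) -
          cexp (((x - Real.log (n + 1) : ℝ) : ℂ) * ((-η : ℝ) + t * I))) /
            ((-η : ℝ) + t * I) ^ 2)) ∧
      ∫ t : ℝ, b n * cexp (-(Real.log (n + 1) : ℝ) * w) *
        ((cexp (((y - Real.log (n + 1) : ℝ) : ℂ) * ((-η : ℝ) + t * I)) -
          cexp (((x - Real.log (n + 1) : ℝ) : ℂ) * ((-η : ℝ) + t * I))) /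
            ((-η : ℝ) + t * I) ^ 2) = 0 := by
    intro n hn
    have hnx : Real.log (n + 1) ≤ x := by
      have : ((n + 1 : ℕ) : ℝ) ≤ M := by exact_mod_cast Finset.mem_range.1 hn
      push_cast at this
      exact Real.log_le_log (by positivity) this
    obtain ⟨hi, hz⟩ := integral_exp_sub_exp_div_sq_eq_zero (x := x - Real.log (n + 1))
      (y := y - Real.log (n + 1)) hη (by linarith) (by linarith)
    exact ⟨hi.const_mul _, by rw [integral_const_mul, hz, mul_zero]⟩
  have hsplit : (fun t : ℝ => F (w + ((-η : ℝ) + t * I)) *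
      ((cexp (y * ((-η : ℝ) + t * I)) - cexp (x * ((-η : ℝ) + t * I))) /
        ((-η : ℝ) + t * I) ^ 2)) = fun t : ℝ => g ((-η : ℝ) + t * I) *
      ((cexp (y * ((-η : ℝ) + t * I)) - cexp (x * ((-η : ℝ) + t * I))) /
        ((-η : ℝ) + t * I) ^ 2) +
      ∑ n ∈ Finset.range M, b n * cexp (-(Real.log (n + 1) : ℝ) * w) *
        ((cexp (((y - Real.log (n + 1) : ℝ) : ℂ) * ((-η : ℝ) + t * I)) -
          cexp (((x - Real.log (n + 1) : ℝ) : ℂ) * ((-η : ℝ) + t * I))) /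
            ((-η : ℝ) + t * I) ^ 2) := by
    funext t
    generalize ((-η : ℝ) + t * I : ℂ) = s
    have hP : dirichletPartialSum b M (w + s) * ((cexp (y * s) - cexp (x * s)) / s ^ 2) =
        ∑ n ∈ Finset.range M, b n * cexp (-(Real.log (n + 1) : ℝ) * w) *
        ((cexp (((y - Real.log (n + 1) : ℝ) : ℂ) * s) -
          cexp (((x - Real.log (n + 1) : ℝ) : ℂ) * s)) / s ^ 2) := by
      rw [dirichletPartialSum, Finset.sum_mul]
      refine Finset.sum_congr rfl fun n _ => ?_
      have hexp : ∀ u : ℝ, cexp (((u - Real.log (n + 1) : ℝ) : ℂ) * s) =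
          cexp (-(Real.log (n + 1) : ℝ) * s) * cexp (u * s) := fun u => by
        rw [← Complex.exp_add]; congr 1; push_cast; ring
      rw [hexp, hexp, mul_add, Complex.exp_add]
      ring
    rw [← hP]
    simp only [g]
    ring
  rw [hsplit, integral_add hgint (integrable_finsetSum _ fun n hn => (hpoly n hn).1),
    integral_finsetSum _ fun n hn => (hpoly n hn).1, Finset.sum_eq_zero fun n hn => (hpoly n hn).2,
    hgval, add_zero]
  simp [g]

/-- Quantitative form of Schnee's theorem: the remainder after `M` terms is `O(M ^ (-η / 2))`. -/
theorem exists_norm_sub_dirichletPartialSum_le_rpow {b : ℕ → ℂ} {s₀ L₀ w : ℂ} {F : ℂ → ℂ} {η : ℝ}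
    (hconv : Tendsto (fun N => dirichletPartialSum b N s₀) atTop (nhds L₀))
    (hF : ∀ s : ℂ, s₀.re < s.re →
      Tendsto (fun N => dirichletPartialSum b N s) atTop (nhds (F s)))
    (hdiff : DifferentiableOn ℂ F {s : ℂ | 0 < s.re})
    {C : ℝ} (hC0 : 0 ≤ C) (hη : 0 < η) (hη1 : η ≤ 1) (hw : 2 * η ≤ w.re)
    (hC : ∀ s : ℂ, η ≤ s.re → ‖F s‖ ≤ C * (1 + ‖s‖) ^ (η / 4)) :
    ∃ K : ℝ, ∀ M : ℕ, 1 ≤ M → ‖dirichletPartialSum b M w - F w‖ ≤ K * (M : ℝ) ^ (-(η / 2)) := by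
  have hCroot : ∀ s : ℂ, η ≤ s.re → ‖F s‖ ≤ C * (1 + ‖s‖) ^ (1 / 2 : ℝ) := fun s hs =>
    (hC s hs).trans (mul_le_mul_of_nonneg_left (Real.rpow_le_rpow_of_exponent_le
      (by linarith [norm_nonneg s]) (by linarith)) hC0)
  let A : ℝ := C * (1 + (1 + ‖w‖) / η) ^ (η / 4)
  let J : ℝ := ∫ t : ℝ, ‖((-η : ℝ) + t * I : ℂ)‖ ^ (-(1 + η / 4))
  have hline : ∀ t : ℝ, η ≤ ‖((-η : ℝ) + t * I : ℂ)‖ := fun t => by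
    simpa [abs_of_pos hη] using abs_re_le_norm_add_mul_I (-η) t
  have hJ : Integrable fun t : ℝ => ‖((-η : ℝ) + t * I : ℂ)‖ ^ (-(1 + η / 4)) := by
    refine integrable_vertical_of_norm_le (H := fun s : ℂ => ‖s‖ ^ (-(1 + η / 4))) (K := 1)
      (p := 1 + η / 4) (by linarith) ?_ fun s _ _ => ?_
    · refine Continuous.rpow_const (by fun_prop) fun t => Or.inl ?_
      exact (hη.trans_le (hline t)).ne'
    · rw [Real.norm_of_nonneg (by positivity), one_mul]
  have hJ0 : 0 ≤ J := integral_nonneg fun t => by positivity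
  refine ⟨A * J / Real.pi * 2 ^ (η / 2), fun M hM => ?_⟩
  have hM1 : (1 : ℝ) ≤ M := by exact_mod_cast hM
  have hM0 : (0 : ℝ) < M := by linarith
  have hformula := integral_dirichlet_kernel hconv hF hdiff hC0 hCroot hη hw hM
  set x : ℝ := Real.log M
  set y : ℝ := Real.log (M + 1)
  have hstep : 1 / (2 * M : ℝ) ≤ y - x := by
    have h := Real.one_sub_inv_le_log_of_pos (show 0 < ((M : ℝ) + 1) / M by positivity)
    rw [Real.log_div (by positivity) hM0.ne'] at h
    refine le_trans ?_ h
    rw [inv_div, one_sub_div (by positivity), div_le_div_iff₀ (by positivity) (by positivity)]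
    linarith
  have hh0 : 0 < y - x := lt_of_lt_of_le (by positivity) hstep
  have hpt : ∀ t : ℝ, ‖F (w + ((-η : ℝ) + t * I)) *
      ((cexp (y * ((-η : ℝ) + t * I)) - cexp (x * ((-η : ℝ) + t * I))) /
        ((-η : ℝ) + t * I) ^ 2)‖ ≤
      2 * A * Real.exp (-(x * η)) * (y - x) ^ (1 - η / 2) *
        ‖((-η : ℝ) + t * I : ℂ)‖ ^ (-(1 + η / 4)) := by
    intro t
    have hs := hline t
    have hre : ((-η : ℝ) + t * I : ℂ).re = -η := by simp
    generalize ((-η : ℝ) + t * I : ℂ) = s at hs hre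
    have hs0 : 0 < ‖s‖ := hη.trans_le hs
    have hFs : ‖F (w + s)‖ ≤ A * ‖s‖ ^ (η / 4) := by
      refine (hC _ (by rw [add_re]; linarith)).trans ?_
      simp only [A]
      rw [mul_assoc, ← Real.mul_rpow (by positivity) (by positivity)]
      gcongr
      have h1 : 1 + ‖w‖ ≤ (1 + ‖w‖) / η * ‖s‖ := by
        rw [div_mul_eq_mul_div, le_div_iff₀ hη]
        gcongr
      linarith [norm_add_le w s]
    have hk := norm_exp_sub_exp_le (x := x) (y := y) (θ := 1 - η / 2) (by linarith) hη.le hre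
      (by linarith) (by linarith)
    have hpow : ‖s‖ ^ (-(1 + η / 4)) = ‖s‖ ^ (η / 4) * ‖s‖ ^ (1 - η / 2) / ‖s‖ ^ 2 := by
      rw [← Real.rpow_two, ← Real.rpow_add hs0, ← Real.rpow_sub hs0]
      congr 1; ring
    rw [Real.mul_rpow hh0.le hs0.le] at hk
    have hA0 : 0 ≤ A := by positivity
    rw [norm_mul, norm_div, norm_pow, hpow, ← mul_div_assoc, ← mul_div_assoc]
    refine div_le_div_of_nonneg_right ?_ (by positivity)
    calc _ ≤ A * ‖s‖ ^ (η / 4) *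
          (2 * Real.exp (-(x * η)) * ((y - x) ^ (1 - η / 2) * ‖s‖ ^ (1 - η / 2))) := by gcongr
      _ = _ := by ring
  have hA0 : 0 ≤ A := by positivity
  have hint := norm_integral_le_of_norm_le
    (hJ.const_mul (2 * A * Real.exp (-(x * η)) * (y - x) ^ (1 - η / 2))) (ae_of_all _ hpt)
  rw [hformula, integral_const_mul] at hint
  have hlhs : ‖-(2 * Real.pi : ℂ) * (((y : ℂ) - (x : ℂ)) * (F w - dirichletPartialSum b M w))‖ =
      2 * Real.pi * ((y - x) * ‖dirichletPartialSum b M w - F w‖) := by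
    rw [norm_mul, norm_mul, norm_neg, ← ofReal_sub, Complex.norm_of_nonneg hh0.le, norm_sub_rev]
    simp [abs_of_pos Real.pi_pos]
  rw [hlhs] at hint
  have hsplit : (y - x) ^ (1 - η / 2) = (y - x) * (y - x) ^ (-(η / 2)) := by
    rw [sub_eq_add_neg 1, Real.rpow_add hh0, Real.rpow_one]
  have hexp : Real.exp (-(x * η)) = (M : ℝ) ^ (-η) := by
    rw [Real.rpow_def_of_pos hM0]; congr 1; ring
  have hhpow : (y - x) ^ (-(η / 2)) ≤ 2 ^ (η / 2) * (M : ℝ) ^ (η / 2) := by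
    refine (Real.rpow_le_rpow_of_nonpos (by positivity) hstep (by linarith)).trans_eq ?_
    rw [one_div, Real.inv_rpow (by positivity), Real.rpow_neg (by positivity), inv_inv,
      Real.mul_rpow (by norm_num) hM0.le]
  have hMpow : (M : ℝ) ^ (-η) * (M : ℝ) ^ (η / 2) = (M : ℝ) ^ (-(η / 2)) := by
    rw [← Real.rpow_add hM0]; congr 1; ring
  rw [hsplit, hexp] at hint
  have hpi := Real.pi_pos
  have hmain : ‖dirichletPartialSum b M w - F w‖ ≤
      A * J / Real.pi * ((M : ℝ) ^ (-η) * (y - x) ^ (-(η / 2))) := by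
    rw [div_mul_eq_mul_div, le_div_iff₀ hpi]
    have h2 : (0 : ℝ) < 2 * (y - x) := by linarith
    refine le_of_mul_le_mul_left (hint.trans_eq' ?_ |>.trans_eq ?_) h2
    · ring
    · simp only [J]; ring
  calc _ ≤ _ := hmain
    _ ≤ A * J / Real.pi * ((M : ℝ) ^ (-η) * (2 ^ (η / 2) * (M : ℝ) ^ (η / 2))) := by gcongr
    _ = _ := by rw [← hMpow]; ring

theorem dirichletPartialSum_eq (a : ℕ → ℂ) (M : ℕ) (s : ℂ) :
    dirichletPartialSum (fun n => a (n + 1)) M s =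
      ∑ n ∈ Finset.range M, a (n + 1) * ((n + 1 : ℕ) : ℂ) ^ (-s) := by
  refine Finset.sum_congr rfl fun n _ => ?_
  rw [Complex.cpow_def_of_ne_zero (by exact_mod_cast n.succ_ne_zero), ← Complex.natCast_log]
  push_cast
  congr 2
  ring

end Schnee

/-- **Schnee's theorem.** If the Dirichlet series `∑ a_n n^{-s}` converges at some
point `s₀`, `F` is analytic on `Ω₀ = {Re s > 0}`, agrees with the sum of the series
on `Re s > Re s₀`, and for every `δ > 0` and `ε > 0` satisfies `|F(s)| ≤ C(1+|s|)^ε`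
on `Re s ≥ δ`, then the series converges to `F(s)` at every `s` with `Re s > 0`. -/
theorem stmt_12 (a : ℕ → ℂ) (s₀ : ℂ) (L₀ : ℂ)
    (hconv : Tendsto (fun M : ℕ => ∑ n ∈ Finset.range M, a (n + 1) * ((n + 1 : ℕ) : ℂ) ^ (-s₀))
      atTop (nhds L₀))
    (F : ℂ → ℂ)
    (hF : DifferentiableOn ℂ F {s : ℂ | 0 < s.re})
    (hFeq : ∀ s : ℂ, s₀.re < s.re →
      Tendsto (fun M : ℕ => ∑ n ∈ Finset.range M, a (n + 1) * ((n + 1 : ℕ) : ℂ) ^ (-s))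
        atTop (nhds (F s)))
    (hgrowth : ∀ δ : ℝ, 0 < δ → ∀ ε : ℝ, 0 < ε → ∃ C : ℝ, 0 < C ∧
      ∀ s : ℂ, δ ≤ s.re → ‖F s‖ ≤ C * (1 + ‖s‖) ^ ε) :
    ∀ s : ℂ, 0 < s.re →
      Tendsto (fun M : ℕ => ∑ n ∈ Finset.range M, a (n + 1) * ((n + 1 : ℕ) : ℂ) ^ (-s))
        atTop (nhds (F s)) := by
  intro s hs
  simp only [← dirichletPartialSum_eq] at hconv hFeq ⊢
  have hη : 0 < min (s.re / 2) 1 := lt_min (by linarith) one_pos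
  have hw : 2 * min (s.re / 2) 1 ≤ s.re := by linarith [min_le_left (s.re / 2) 1]
  obtain ⟨C, hC0, hC⟩ := hgrowth _ hη (min (s.re / 2) 1 / 4) (by linarith)
  obtain ⟨K, hK⟩ := exists_norm_sub_dirichletPartialSum_le_rpow hconv hFeq hF hC0.le hη
    (min_le_right _ _) hw hC
  refine tendsto_iff_norm_sub_tendsto_zero.2 (squeeze_zero' (Eventually.of_forall fun _ =>
    norm_nonneg _) ((eventually_ge_atTop 1).mono hK) ?_)
  simpa using ((tendsto_rpow_neg_atTop (half_pos hη)).comp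
    tendsto_natCast_atTop_atTop).const_mul K
end

section
/- Let a : ℕ≥1 → ℂ and σ_0 ∈ ℝ with ∑_{n=1}^∞ |a_n| n^{-σ_0} < ∞, and let f(σ_0 + it) = ∑_{n=1}^∞ a_n n^{-σ_0 - it} for t ∈ ℝ. Then for every real x > 0: if x = n for a positive integer n, then lim_{T→∞} (1/(2T)) ∫_{-T}^{T} f(σ_0 + it)·x^{σ_0 + it} dt = a_n; and if x is not a positive integer, then lim_{T→∞} (1/(2T)) ∫_{-T}^{T} f(σ_0 + it)·x^{σ_0 + it} dt = 0. -/
open Filter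

/-- The mean value of a pure exponential `t ↦ exp (iλt)` is `1` if `λ = 0` and `0` otherwise. -/
theorem tendsto_mean_exp_mul_I (l : ℝ) :
    Tendsto (fun T : ℝ => (1 / (2 * T) : ℂ) *
        ∫ t in (-T)..T, Complex.exp ((l * Complex.I) * t))
      atTop (nhds (if l = 0 then 1 else 0)) := by
  split_ifs with hl
  · refine tendsto_const_nhds.congr' ?_
    filter_upwards [eventually_gt_atTop 0] with T hT
    have hT' : (T : ℂ) ≠ 0 := by exact_mod_cast hT.ne'
    simp only [hl, Complex.ofReal_zero, zero_mul, Complex.exp_zero,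
      intervalIntegral.integral_const, Complex.real_smul]
    push_cast
    field_simp
    ring
  · have hc : (l * Complex.I : ℂ) ≠ 0 := by simp [hl]
    have hlim : Tendsto (fun T : ℝ => 1 / |l| * T⁻¹) atTop (nhds 0) := by
      simpa using tendsto_inv_atTop_zero.const_mul (1 / |l|)
    refine squeeze_zero_norm' ?_ hlim
    filter_upwards [eventually_gt_atTop 0] with T hT
    have hexp : ∀ t : ℝ, ‖Complex.exp ((l * Complex.I) * t)‖ = 1 := fun t => by
      simp [Complex.norm_exp]
    rw [integral_exp_mul_complex hc, norm_mul, norm_div, norm_div]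
    have hsub : ‖Complex.exp ((l * Complex.I) * T)
        - Complex.exp ((l * Complex.I) * (-T : ℝ))‖ ≤ 2 :=
      (norm_sub_le _ _).trans (by rw [hexp, hexp]; norm_num)
    have hden : ‖(l * Complex.I : ℂ)‖ = |l| := by simp
    have hT2 : ‖(2 * T : ℂ)‖ = 2 * T := by simp [abs_of_pos hT]
    rw [hden, hT2, norm_one]
    calc 1 / (2 * T) * (_ / |l|) ≤ 1 / (2 * T) * (2 / |l|) := by gcongr
      _ = 1 / |l| * T⁻¹ := by
        have := abs_pos.mpr hl
        field_simp

/-- The averages of `t ↦ exp (iλt)` over `[-T, T]` have norm at most `1`. -/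
theorem norm_mean_exp_mul_I_le (l T : ℝ) (hT : 0 < T) :
    ‖(1 / (2 * T) : ℂ) * ∫ t in (-T)..T, Complex.exp ((l * Complex.I) * t)‖ ≤ 1 := by
  have h : ‖∫ t in (-T)..T, Complex.exp ((l * Complex.I) * t)‖ ≤ 1 * |T - -T| :=
    intervalIntegral.norm_integral_le_of_norm_le_const fun t _ => by simp [Complex.norm_exp]
  have hT2 : ‖(2 * T : ℂ)‖ = 2 * T := by simp [abs_of_pos hT]
  have habs : |T - -T| = 2 * T := by rw [abs_of_pos] <;> linarith
  rw [habs, one_mul] at h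
  rw [norm_mul, norm_div, hT2, norm_one, one_div, inv_mul_le_iff₀ (by positivity)]
  simpa using h

/-- The mean value of an absolutely convergent series of exponentials `∑ cₙ exp (iλₙt)`
is the sum of the coefficients `cₙ` with `λₙ = 0`. -/
theorem tendsto_mean_tsum_exp_mul_I {c : ℕ → ℂ} (l : ℕ → ℝ) (hc : Summable fun n => ‖c n‖) :
    Tendsto (fun T : ℝ => (1 / (2 * T) : ℂ) *
        ∫ t in (-T)..T, ∑' n, c n * Complex.exp ((l n * Complex.I) * t))
      atTop (nhds (∑' n, c n * if l n = 0 then 1 else 0)) := by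
  have hsum : ∀ T : ℝ, (∑' n, c n * ((1 / (2 * T) : ℂ) *
      ∫ t in (-T)..T, Complex.exp ((l n * Complex.I) * t))) =
      (1 / (2 * T) : ℂ) *
        ∫ t in (-T)..T, ∑' n, c n * Complex.exp ((l n * Complex.I) * t) := fun T => by
    have hnorm : ∀ n (t : ℝ), ‖c n * Complex.exp ((l n * Complex.I) * t)‖ = ‖c n‖ :=
      fun n t => by simp [Complex.norm_exp]
    have := intervalIntegral.hasSum_integral_of_dominated_convergence
      (μ := MeasureTheory.volume) (a := -T) (b := T)
      (F := fun n (t : ℝ) => c n * Complex.exp ((l n * Complex.I) * t))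
      (f := fun t : ℝ => ∑' n, c n * Complex.exp ((l n * Complex.I) * t))
      (fun n _ => ‖c n‖)
      (fun n => by
        apply Continuous.aestronglyMeasurable
        fun_prop)
      (fun n => Eventually.of_forall fun t _ => (hnorm n t).le)
      (Eventually.of_forall fun t _ => hc)
      intervalIntegrable_const
      (Eventually.of_forall fun t _ => by
        refine (Summable.of_norm ?_).hasSum
        simpa only [hnorm] using hc)
    rw [← this.tsum_eq, ← tsum_mul_left]
    refine tsum_congr fun n => ?_
    rw [intervalIntegral.integral_const_mul]
    ring
  simp only [← hsum]
  refine tendsto_tsum_of_dominated_convergence hc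
    (fun n => (tendsto_mean_exp_mul_I (l n)).const_mul (c n)) ?_
  filter_upwards [eventually_gt_atTop 0] with T hT n
  rw [norm_mul]
  exact mul_le_of_le_one_right (norm_nonneg _) (norm_mean_exp_mul_I_le _ _ hT)

/-- For positive `x` and `y`, the product `y^{-(σ+it)} x^{σ+it}` in exponential form. -/
theorem cpow_neg_mul_cpow_eq {x y : ℝ} (hx : 0 < x) (hy : 0 < y) (σ t : ℝ) :
    (y : ℂ) ^ (-((σ : ℂ) + (t : ℂ) * Complex.I)) * (x : ℂ) ^ ((σ : ℂ) + (t : ℂ) * Complex.I) =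
      ((y ^ (-σ) * x ^ σ : ℝ) : ℂ) *
        Complex.exp ((((Real.log x - Real.log y : ℝ) : ℂ) * Complex.I) * t) := by
  rw [Complex.cpow_def_of_ne_zero (by exact_mod_cast hy.ne'),
    Complex.cpow_def_of_ne_zero (by exact_mod_cast hx.ne'),
    Real.rpow_def_of_pos hx, Real.rpow_def_of_pos hy, ← Complex.ofReal_log hx.le,
    ← Complex.ofReal_log hy.le]
  push_cast
  rw [← Complex.exp_add, ← Complex.exp_add, ← Complex.exp_add]
  congr 1
  ring

/-- Coefficient formula for absolutely convergent Dirichlet series: if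
`∑ |a_n| n^{-σ₀} < ∞` and `f(σ₀ + it) = ∑ a_n n^{-σ₀ - it}`, then for `x > 0`,
`lim_{T→∞} (1/2T) ∫_{-T}^T f(σ₀+it) x^{σ₀+it} dt` equals `a_n` if `x = n` and `0`
if `x` is not a positive integer. -/
theorem stmt_13 (a : ℕ → ℂ) (σ₀ : ℝ)
    (habs : Summable (fun n : ℕ => ‖a (n + 1)‖ * ((n + 1 : ℕ) : ℝ) ^ (-σ₀)))
    (f : ℝ → ℂ)
    (hf : ∀ t : ℝ, f t = ∑' n : ℕ,
      a (n + 1) * ((n + 1 : ℕ) : ℂ) ^ (-((σ₀ : ℂ) + (t : ℂ) * Complex.I)))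
    (x : ℝ) (hx : 0 < x) :
    (∀ n : ℕ, 1 ≤ n → x = (n : ℝ) →
      Tendsto (fun T : ℝ => (1 / (2 * T) : ℂ) *
          ∫ t in (-T)..T, f t * (x : ℂ) ^ ((σ₀ : ℂ) + (t : ℂ) * Complex.I))
        atTop (nhds (a n))) ∧
    ((∀ n : ℕ, 1 ≤ n → x ≠ (n : ℝ)) →
      Tendsto (fun T : ℝ => (1 / (2 * T) : ℂ) *
          ∫ t in (-T)..T, f t * (x : ℂ) ^ ((σ₀ : ℂ) + (t : ℂ) * Complex.I))
        atTop (nhds 0)) := by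
  set c : ℕ → ℂ := fun n => a (n + 1) * ((((n + 1 : ℕ) : ℝ) ^ (-σ₀) * x ^ σ₀ : ℝ) : ℂ) with hcdef
  set l : ℕ → ℝ := fun n => Real.log x - Real.log ((n + 1 : ℕ) : ℝ) with hldef
  have hpos : ∀ n : ℕ, (0 : ℝ) < ((n + 1 : ℕ) : ℝ) := fun n => by positivity
  have hc : Summable fun n => ‖c n‖ := by
    refine (habs.mul_right (x ^ σ₀)).congr fun n => ?_
    rw [hcdef, norm_mul, Complex.norm_real, Real.norm_of_nonneg (by positivity), mul_assoc]
  have hl : ∀ n, l n = 0 ↔ x = ((n + 1 : ℕ) : ℝ) := fun n => by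
    rw [hldef, sub_eq_zero]
    exact Real.log_injOn_pos.eq_iff hx (hpos n)
  have hfx : ∀ t : ℝ, f t * (x : ℂ) ^ ((σ₀ : ℂ) + (t : ℂ) * Complex.I) =
      ∑' n, c n * Complex.exp ((l n * Complex.I) * t) := fun t => by
    rw [hf, ← tsum_mul_right]
    refine tsum_congr fun n => ?_
    rw [mul_assoc, mul_assoc, ← cpow_neg_mul_cpow_eq hx (hpos n), Complex.ofReal_natCast]
  have hmain := tendsto_mean_tsum_exp_mul_I l hc
  simp only [← hfx] at hmain
  refine ⟨fun n hn hxn => ?_, fun hne => ?_⟩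
  · obtain ⟨m, rfl⟩ : ∃ m, n = m + 1 := ⟨n - 1, by omega⟩
    convert hmain using 2
    rw [tsum_eq_single m fun k hk => ?_]
    · rw [if_pos ((hl m).2 hxn), mul_one, hcdef]
      simp only
      rw [← hxn, ← Real.rpow_add hx]
      simp
    · rw [if_neg, mul_zero]
      rw [hl, hxn]
      exact_mod_cast fun h => hk (by omega)
  · convert hmain using 2
    rw [eq_comm]
    refine (tsum_congr fun n => ?_).trans tsum_zero
    rw [if_neg fun h => hne (n + 1) (by omega) ((hl n).1 h), mul_zero]
end

section
/- Let a : ℕ≥1 → ℂ and suppose the partial sums ∑_{n=1}^{M} a_n n^{-s_0} converge as M → ∞ at some complex number s_0. Then on the half-plane Ω_{Re(s_0)} = {s : Re(s) > Re(s_0)} the partial sums converge at every point, the convergence is uniform on every compact subset of Ω_{Re(s_0)}, and the limit function f(s) = lim_{M→∞} ∑_{n=1}^{M} a_n n^{-s} is analytic on Ω_{Re(s_0)}. -/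
open Filter

/-- Consecutive values of `x ↦ x ^ (-w)` differ by at most `‖w‖ x ^ (-Re w - 1)`. -/
lemma norm_cpow_neg_sub_cpow_neg_succ_le {x : ℝ} (hx : 0 < x) {w : ℂ} (hw : 0 ≤ w.re) :
    ‖(x : ℂ) ^ (-w) - ((x + 1 : ℝ) : ℂ) ^ (-w)‖ ≤ ‖w‖ * x ^ (-w.re - 1) := by
  have hderiv : ∀ t ∈ Set.Icc x (x + 1), HasDerivWithinAt (fun y : ℝ => (y : ℂ) ^ (-w))
      (-w * (t : ℂ) ^ (-w - 1)) (Set.Icc x (x + 1)) t := by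
    intro t ht
    have ht0 : 0 < t := hx.trans_le ht.1
    have h := ((hasDerivAt_id (t : ℂ)).cpow_const (c := -w)
      (Complex.ofReal_mem_slitPlane.2 ht0)).comp_ofReal
    simpa using h.hasDerivWithinAt
  have hbound : ∀ t ∈ Set.Icc x (x + 1),
      ‖-w * (t : ℂ) ^ (-w - 1)‖ ≤ ‖w‖ * x ^ (-w.re - 1) := by
    intro t ht
    rw [norm_mul, norm_neg, Complex.norm_cpow_eq_rpow_re_of_pos (hx.trans_le ht.1)]
    refine mul_le_mul_of_nonneg_left ?_ (norm_nonneg w)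
    simpa using Real.rpow_le_rpow_of_nonpos hx ht.1 (by linarith : -w.re - 1 ≤ 0)
  have h := (convex_Icc x (x + 1)).norm_image_sub_le_of_norm_hasDerivWithin_le hderiv hbound
    (Set.right_mem_Icc.2 (by linarith)) (Set.left_mem_Icc.2 (by linarith))
  simpa using h

/-- Summation by parts for a Dirichlet polynomial, with the factor `(n + 1) ^ (-s₀)` absorbed into
the partial sums. -/
lemma sum_dirichlet_eq_by_parts (a : ℕ → ℂ) (s₀ s : ℂ) (M : ℕ) :
    ∑ n ∈ Finset.range M, a (n + 1) * ((n + 1 : ℕ) : ℂ) ^ (-s) =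
      (∑ n ∈ Finset.range M, a (n + 1) * ((n + 1 : ℕ) : ℂ) ^ (-s₀)) *
          ((M + 1 : ℕ) : ℂ) ^ (-(s - s₀)) +
        ∑ n ∈ Finset.range M,
          (∑ k ∈ Finset.range (n + 1), a (k + 1) * ((k + 1 : ℕ) : ℂ) ^ (-s₀)) *
            (((n + 1 : ℕ) : ℂ) ^ (-(s - s₀)) - ((n + 1 + 1 : ℕ) : ℂ) ^ (-(s - s₀))) := by
  induction M with
  | zero => simp
  | succ M ih =>
    have hsplit : ((M + 1 : ℕ) : ℂ) ^ (-s) =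
        ((M + 1 : ℕ) : ℂ) ^ (-s₀) * ((M + 1 : ℕ) : ℂ) ^ (-(s - s₀)) := by
      rw [← Complex.cpow_add _ _ (Nat.cast_ne_zero.2 M.succ_ne_zero)]
      congr 1
      ring
    rw [Finset.sum_range_succ, ih, hsplit, Finset.sum_range_succ (fun n => _ * (_ - _)),
      Finset.sum_range_succ (fun n => a (n + 1) * ((n + 1 : ℕ) : ℂ) ^ (-s₀)) M]
    ring

/-- A Dirichlet series whose partial sums at `s₀` are bounded converges uniformly on every set
where `s - s₀` is bounded with real part bounded below by a positive constant. -/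
lemma tendstoUniformlyOn_dirichlet_of_bounded (a : ℕ → ℂ) (s₀ : ℂ) {C δ R : ℝ} {K : Set ℂ}
    (hC : ∀ M : ℕ, ‖∑ n ∈ Finset.range M, a (n + 1) * ((n + 1 : ℕ) : ℂ) ^ (-s₀)‖ ≤ C)
    (hδ : 0 < δ) (hKδ : ∀ s ∈ K, δ ≤ (s - s₀).re) (hKR : ∀ s ∈ K, ‖s - s₀‖ ≤ R) :
    TendstoUniformlyOn
      (fun M : ℕ => fun s : ℂ => ∑ n ∈ Finset.range M, a (n + 1) * ((n + 1 : ℕ) : ℂ) ^ (-s))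
      (fun s => ∑' n : ℕ,
        (∑ k ∈ Finset.range (n + 1), a (k + 1) * ((k + 1 : ℕ) : ℂ) ^ (-s₀)) *
          (((n + 1 : ℕ) : ℂ) ^ (-(s - s₀)) - ((n + 1 + 1 : ℕ) : ℂ) ^ (-(s - s₀)))) atTop K := by
  have hC0 : 0 ≤ C := (norm_nonneg _).trans (hC 0)
  have hpow : ∀ (n : ℕ) {x y : ℝ}, x ≤ y → ((n + 1 : ℕ) : ℝ) ^ x ≤ ((n + 1 : ℕ) : ℝ) ^ y :=
    fun n _ _ h => Real.rpow_le_rpow_of_exponent_le (by simp) h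
  have hsum : Summable fun n : ℕ => C * (R * ((n + 1 : ℕ) : ℝ) ^ (-δ - 1)) := by
    refine Summable.mul_left _ (Summable.mul_left _ ?_)
    exact (summable_nat_add_iff 1).2 (Real.summable_nat_rpow.2 (by linarith))
  have hmain := tendstoUniformlyOn_tsum_nat (s := K) (f := fun (n : ℕ) (s : ℂ) =>
      (∑ k ∈ Finset.range (n + 1), a (k + 1) * ((k + 1 : ℕ) : ℂ) ^ (-s₀)) *
        (((n + 1 : ℕ) : ℂ) ^ (-(s - s₀)) - ((n + 1 + 1 : ℕ) : ℂ) ^ (-(s - s₀)))) hsum (by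
    intro n s hs
    rw [norm_mul]
    refine mul_le_mul (hC _) ?_ (norm_nonneg _) hC0
    have hdiff := norm_cpow_neg_sub_cpow_neg_succ_le (x := ((n + 1 : ℕ) : ℝ)) (by positivity)
      (hδ.le.trans (hKδ s hs))
    refine le_trans (by simpa using hdiff) (mul_le_mul (hKR s hs) (hpow n ?_) (by positivity)
      ((norm_nonneg _).trans (hKR s hs)))
    have hre := hKδ s hs
    rw [Complex.sub_re] at hre
    linarith)
  have hboundary : TendstoUniformlyOn (fun (M : ℕ) (s : ℂ) =>
      (∑ n ∈ Finset.range M, a (n + 1) * ((n + 1 : ℕ) : ℂ) ^ (-s₀)) *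
        ((M + 1 : ℕ) : ℂ) ^ (-(s - s₀))) (fun _ => 0) atTop K := by
    have hlim : Tendsto (fun M : ℕ => C * ((M + 1 : ℕ) : ℝ) ^ (-δ)) atTop (nhds 0) := by
      simpa using (((tendsto_rpow_neg_atTop hδ).comp tendsto_natCast_atTop_atTop).comp
        (tendsto_add_atTop_nat 1)).const_mul C
    rw [Metric.tendstoUniformlyOn_iff]
    intro ε hε
    filter_upwards [hlim.eventually_lt_const hε] with M hM s hs
    rw [dist_zero_left, norm_mul]
    refine lt_of_le_of_lt (mul_le_mul (hC M) ?_ (norm_nonneg _) hC0) hM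
    rw [Complex.norm_natCast_cpow_of_pos M.succ_pos, Complex.neg_re]
    exact hpow M (neg_le_neg (hKδ s hs))
  refine ((hboundary.add hmain).congr (Eventually.of_forall fun M s _ => ?_)).congr_right
    fun s _ => ?_
  · exact (sum_dirichlet_eq_by_parts a s₀ s M).symm
  · simp

/-- If a Dirichlet series `∑ a_n n^{-s}` converges at `s₀`, then it converges at
every point of the half-plane `Ω_{Re s₀} = {Re s > Re s₀}`, uniformly on compact
subsets, and the limit function is analytic there. -/
theorem stmt_14 (a : ℕ → ℂ) (s₀ : ℂ)
    (hconv : ∃ L : ℂ,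
      Tendsto (fun M : ℕ => ∑ n ∈ Finset.range M, a (n + 1) * ((n + 1 : ℕ) : ℂ) ^ (-s₀))
        atTop (nhds L)) :
    ∃ f : ℂ → ℂ,
      (∀ s : ℂ, s₀.re < s.re →
        Tendsto (fun M : ℕ => ∑ n ∈ Finset.range M, a (n + 1) * ((n + 1 : ℕ) : ℂ) ^ (-s))
          atTop (nhds (f s))) ∧
      (∀ K : Set ℂ, K ⊆ {s : ℂ | s₀.re < s.re} → IsCompact K →
        TendstoUniformlyOn
          (fun M : ℕ => fun s : ℂ => ∑ n ∈ Finset.range M, a (n + 1) * ((n + 1 : ℕ) : ℂ) ^ (-s))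
          f atTop K) ∧
      DifferentiableOn ℂ f {s : ℂ | s₀.re < s.re} := by
  obtain ⟨L, hL⟩ := hconv
  obtain ⟨C, hC⟩ := (Metric.isBounded_range_of_tendsto _ hL).exists_norm_le
  have hC' := fun M => hC _ (Set.mem_range_self M)
  have hunif : ∀ K : Set ℂ, K ⊆ {s : ℂ | s₀.re < s.re} → IsCompact K →
      TendstoUniformlyOn
        (fun M : ℕ => fun s : ℂ => ∑ n ∈ Finset.range M, a (n + 1) * ((n + 1 : ℕ) : ℂ) ^ (-s))
        (fun s => ∑' n : ℕ,
          (∑ k ∈ Finset.range (n + 1), a (k + 1) * ((k + 1 : ℕ) : ℂ) ^ (-s₀)) *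
            (((n + 1 : ℕ) : ℂ) ^ (-(s - s₀)) - ((n + 1 + 1 : ℕ) : ℂ) ^ (-(s - s₀))))
        atTop K := by
    intro K hK hcompact
    rcases K.eq_empty_or_nonempty with rfl | hne
    · exact tendstoUniformlyOn_empty
    obtain ⟨z, hz, hmin⟩ := hcompact.exists_isMinOn hne Complex.continuous_re.continuousOn
    obtain ⟨R, hR⟩ := hcompact.exists_bound_of_continuousOn
      (f := fun s => s - s₀) (by fun_prop)
    refine tendstoUniformlyOn_dirichlet_of_bounded a s₀ hC' (sub_pos.2 (hK hz)) ?_ hR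
    intro s hs
    rw [Complex.sub_re]
    exact sub_le_sub_right (hmin hs) _
  have hopen : IsOpen {s : ℂ | s₀.re < s.re} := isOpen_lt continuous_const Complex.continuous_re
  refine ⟨_, fun s hs => ?_, hunif, ?_⟩
  · exact (hunif {s} (Set.singleton_subset_iff.2 hs) isCompact_singleton).tendsto_at rfl
  · refine ((tendstoLocallyUniformlyOn_iff_forall_isCompact hopen).2 hunif).differentiableOn
      (Eventually.of_forall fun M => ?_) hopen
    refine DifferentiableOn.fun_sum fun n _ => DifferentiableOn.const_mul ?_ _
    exact differentiableOn_id.neg.const_cpow (Or.inl (Nat.cast_ne_zero.2 n.succ_ne_zero))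
end
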